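/- arXiv:1805.02213 — 2 statements merged into one kernel-verified Lean document; each statement's English description precedes it below -/
import Mathlib

section
/- Fix α ∈ (0,1). Define a sequence of partitions of [0,1] into finitely many closed intervals with pairwise disjoint interiors as follows: π_0 = {[0,1]}, and for m ≥ 1 the partition π_m is obtained from π_{m−1} by replacing every interval [a,b] of maximal length in π_{m−1} by the two intervals [a, a+α(b−a)] and [a+α(b−a), b]. Let k(m) be the number of intervals of π_m and let t_1^m, …, t_{k(m)}^m be their right endpoints. Then for every continuous function f : [0,1] → ℝ, lim_{m→∞} (1/k(m)) · Σ_{i=1}^{k(m)} f(t_i^m) = ∫_0^1 f(t) dt. -/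
/-!
Let `β = 1 - α`. The intervals of `π_m` are obtained from `[0,1]` by splitting exactly those
intervals whose length is at least some threshold `t`. Let `N x` be the number of pieces obtained
when an interval of length `x` is split recursively as long as the length is at least `1`; thus
`N x = 1` for `x < 1` and `N x = N (α x) + N (β x)` for `x ≥ 1`. By scaling, an interval of length
`L` of `π_M` contains `N (L / t)` intervals of the later partition with threshold `t`.

The heart of the matter is `N (α x) / N x → α` (`count_ratio_tendsto`), an elementary instance of
the renewal theorem. The function `Z x = N x / x` is bounded between positive constants and satisfies
`Z x = α Z (α x) + β Z (β x)`; so does `D x = Z x - Z (α x)`. If `η = limsup D` were positive, then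
at points `x` where `D x` is nearly `η` also `D (α x)`, `D (α² x)`, … would be nearly `η`
(a convex combination of values at most about `η` is near `η` only if all of them are), and summing
`k` of these would give `Z x - Z (α^k x) ≈ k η`, which is impossible for large `k`
(`renewal_upper`). The same bound for `-Z` yields `D → 0`.

Hence `N (L x) / N x → L` for all lengths `L = α^i β^j` which occur, so each interval of `π_M`
receives asymptotically its fair share of the points, and the averages of `f` are
asymptotically within `ε` of the Riemann sum of `f` over `π_M`. The mesh of `π_m` tends to `0`
because the number of intervals strictly increases while it is bounded by `N (1 / t)` as long as
some interval has length at least `t`.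

All bookkeeping rests on one invariance (`sum_step`): for a function `h` of intervals which is
additive under the splits performed, `∑ p ∈ π m, h p` does not change. It is applied to the counts
`N (L / t)`, to recursively defined sums of `f` over the pieces, to the length and to the integral.
-/

open Filter Topology

/-- Splitting an interval `[a, b]` (represented by the pair of its endpoints) in
proportion `α : (1 − α)` into `[a, a + α(b−a)]` and `[a + α(b−a), b]`. -/
noncomputable def kakSplit (α : ℝ) (p : ℝ × ℝ) : Finset (ℝ × ℝ) :=
  {(p.1, p.1 + α * (p.2 - p.1)), (p.1 + α * (p.2 - p.1), p.2)}

/-- The intervals of maximal length in a finite collection of intervals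
(represented by the pairs of their endpoints). -/
noncomputable def kakMax (P : Finset (ℝ × ℝ)) : Finset (ℝ × ℝ) :=
  P.filter fun p => ∀ q ∈ P, q.2 - q.1 ≤ p.2 - p.1

/-! ### Recursion along splitting -/

/-- A function may be prescribed at points of size less than `1` and by
`V x = V (l x) + V (r x)` at the others, if `l` and `r` shrink the size by factors `α`, `β < 1`. -/
lemma exists_splitRec {X : Type*} (ℓ : X → ℝ) (l r : X → X) (g : X → ℝ) {α β : ℝ} (hα : 0 < α)
    (hβ : 0 < β) (hαβ : α + β = 1) (hl : ∀ x, ℓ (l x) = α * ℓ x) (hr : ∀ x, ℓ (r x) = β * ℓ x) :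
    ∃ V : X → ℝ, (∀ x, ℓ x < 1 → V x = g x) ∧ (∀ x, 1 ≤ ℓ x → V x = V (l x) + V (r x)) := by
  classical
  have hμ : 0 < min α β := lt_min hα hβ
  -- A split of a point of size at least `1` lowers the size by at least `min α β`.
  have key : ∀ a b x, 0 < a → a + b = 1 → min α β ≤ b → 1 ≤ ℓ x →
      ⌊a * ℓ x / min α β⌋₊ < ⌊ℓ x / min α β⌋₊ := by
    intro a b x ha hab hb hx
    have h1 : a * ℓ x / min α β + 1 ≤ ℓ x / min α β := by
      rw [div_add_one hμ.ne']
      gcongr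
      nlinarith
    have h2 : 0 ≤ a * ℓ x / min α β := by positivity
    have := Nat.floor_le_floor h1
    rw [Nat.floor_add_one h2] at this
    omega
  let ν : X → ℕ := fun x => ⌊ℓ x / min α β⌋₊
  have hνl : ∀ x, 1 ≤ ℓ x → ν (l x) < ν x := fun x hx => by
    simp only [ν, hl]
    exact key α β x hα hαβ (min_le_right _ _) hx
  have hνr : ∀ x, 1 ≤ ℓ x → ν (r x) < ν x := fun x hx => by
    simp only [ν, hr]
    exact key β α x hβ (by linarith) (min_le_left _ _) hx
  let wf := (measure ν).wf
  let F : ∀ x, (∀ y, ν y < ν x → ℝ) → ℝ := fun x ih =>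
    if h : 1 ≤ ℓ x then ih (l x) (hνl x h) + ih (r x) (hνr x h) else g x
  refine ⟨wf.fix F, fun x hx => ?_, fun x hx => ?_⟩
  · rw [wf.fix_eq]
    simp only [F]
    rw [dif_neg (not_le.2 hx)]
  · rw [wf.fix_eq]
    simp only [F]
    rw [dif_pos hx]

/-- The induction principle matching `exists_splitRec`. -/
lemma splitInd {X : Type*} (ℓ : X → ℝ) (l r : X → X) {α β : ℝ} (hα : 0 < α)
    (hβ : 0 < β) (hαβ : α + β = 1) (hl : ∀ x, ℓ (l x) = α * ℓ x) (hr : ∀ x, ℓ (r x) = β * ℓ x)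
    (P : X → Prop) (hbase : ∀ x, ℓ x < 1 → P x) (hstep : ∀ x, 1 ≤ ℓ x → P (l x) → P (r x) → P x)
    (x : X) : P x := by
  have hμ : 0 < min α β := lt_min hα hβ
  have main : ∀ n : ℕ, ∀ x, ℓ x < 1 + n * min α β → P x := by
    intro n
    induction n with
    | zero => intro x hx; exact hbase x (by simpa using hx)
    | succ n ih =>
      intro x hx
      by_cases h : ℓ x < 1
      · exact hbase x h
      · push Not at h
        push_cast at hx
        refine hstep x h (ih _ ?_) (ih _ ?_)
        · rw [hl]
          nlinarith [min_le_right α β]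
        · rw [hr]
          nlinarith [min_le_left α β]
  obtain ⟨n, hn⟩ := exists_nat_gt (ℓ x / min α β)
  rw [div_lt_iff₀ hμ] at hn
  exact main n x (by linarith)

/-! ### The renewal argument -/

/-- A bounded solution `Z` of the renewal equation cannot have
`Z x - Z (α x)` bounded away from `0` from above along a sequence tending to infinity. -/
lemma renewal_upper {α β : ℝ} (hα : 0 < α) (hβ : 0 < β) (hαβ : α + β = 1) (Z : ℝ → ℝ) (B : ℝ)
    (hB : ∀ᶠ x in atTop, |Z x| ≤ B) (hZ : ∀ᶠ x in atTop, Z x = α * Z (α * x) + β * Z (β * x))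
    {ε : ℝ} (hε : 0 < ε) : ∀ᶠ x in atTop, Z x - Z (α * x) < ε := by
  have tα : Tendsto (fun x : ℝ => α * x) atTop atTop := tendsto_id.const_mul_atTop hα
  have tβ : Tendsto (fun x : ℝ => β * x) atTop atTop := tendsto_id.const_mul_atTop hβ
  have tk : ∀ k : ℕ, Tendsto (fun x : ℝ => α ^ k * x) atTop atTop :=
    fun k => tendsto_id.const_mul_atTop (pow_pos hα k)
  set D : ℝ → ℝ := fun x => Z x - Z (α * x) with hD
  have hDeq : ∀ᶠ x in atTop, D x = α * D (α * x) + β * D (β * x) := by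
    filter_upwards [hZ, tα.eventually hZ] with x h1 h2
    simp only [hD]
    rw [mul_left_comm β α x] at h2
    linear_combination h1 - h2
  have hDB : ∀ᶠ x in atTop, |D x| ≤ 2 * B := by
    filter_upwards [hB, tα.eventually hB] with x h1 h2
    simp only [hD]
    rw [abs_le] at *
    constructor <;> linarith
  have hbdd : IsBoundedUnder (· ≤ ·) atTop D :=
    ⟨2 * B, by simpa using hDB.mono fun x h => (abs_le.1 h).2⟩
  have hcobdd : IsCoboundedUnder (· ≤ ·) atTop D :=
    IsBoundedUnder.isCoboundedUnder_le ⟨-(2 * B), by simpa using hDB.mono fun x h => (abs_le.1 h).1⟩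
  set η := limsup D atTop with hη
  have hup : ∀ δ > 0, ∀ᶠ x in atTop, D x < η + δ := fun δ hδ =>
    eventually_lt_of_limsup_lt (by linarith) hbdd
  have hfr : ∀ δ > 0, ∃ᶠ x in atTop, η - δ < D x := fun δ hδ =>
    frequently_lt_of_lt_limsup hcobdd (by linarith)
  -- Near-maximality of `D` at `x` propagates to `α x`, …, `α^k x`.
  have hmany : ∀ k : ℕ, ∀ δ > 0, ∃ᶠ x in atTop, ∀ i ≤ k, η - δ < D (α ^ i * x) := by
    intro k
    induction k with
    | zero =>
      intro δ hδ
      refine (hfr δ hδ).mono fun x hx i hi => ?_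
      obtain rfl : i = 0 := by omega
      simpa using hx
    | succ k ih =>
      intro δ hδ
      have hδ' : 0 < δ * α / 2 := by positivity
      have hle : δ * α / 2 ≤ δ := by nlinarith
      have e1 := (tk k).eventually hDeq
      have e2 := (tβ.comp (tk k)).eventually (hup _ hδ')
      refine ((ih _ hδ').and_eventually (e1.and e2)).mono ?_
      rintro x ⟨h1, h2, h3⟩ i hi
      rcases Nat.lt_or_ge k i with hki | hki
      · obtain rfl : i = k + 1 := by omega
        have h4 := h1 k le_rfl
        simp only [Function.comp] at h3
        rw [pow_succ', mul_assoc]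
        have h5 : β * D (β * (α ^ k * x)) < β * (η + δ * α / 2) := by gcongr
        have h6 : α * (η - δ) < α * D (α * (α ^ k * x)) := by
          have hβ1 : β * (δ * α / 2) ≤ δ * α / 2 := by nlinarith
          have : β = 1 - α := by linarith
          subst this
          nlinarith
        exact lt_of_mul_lt_mul_left h6 hα.le
      · linarith [h1 i hki]
  have hη0 : η ≤ 0 := by
    by_contra hpos
    push Not at hpos
    obtain ⟨k, hk⟩ := exists_nat_gt (2 * B / (η / 2))
    rw [div_lt_iff₀ (by linarith)] at hk
    obtain ⟨x, h1, h2, h3⟩ :=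
      ((hmany k (η / 2) (by linarith)).and_eventually (hB.and ((tk k).eventually hB))).exists
    have htel : ∀ j ≤ k, (j : ℝ) * (η / 2) ≤ Z x - Z (α ^ j * x) := by
      intro j
      induction j with
      | zero => simp
      | succ j ih =>
        intro hj
        have a1 := ih (by omega)
        have a2 := h1 j (by omega)
        simp only [hD] at a2
        rw [pow_succ', mul_assoc]
        push_cast
        linarith
    have := htel k le_rfl
    rw [abs_le] at h2 h3
    linarith
  filter_upwards [hup ε hε] with x hx
  linarith

lemma renewal_tendsto {α β : ℝ} (hα : 0 < α) (hβ : 0 < β) (hαβ : α + β = 1) (Z : ℝ → ℝ) (B : ℝ)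
    (hB : ∀ᶠ x in atTop, |Z x| ≤ B) (hZ : ∀ᶠ x in atTop, Z x = α * Z (α * x) + β * Z (β * x)) :
    Tendsto (fun x => Z x - Z (α * x)) atTop (𝓝 0) := by
  rw [Metric.tendsto_nhds]
  intro ε hε
  have h2 := renewal_upper hα hβ hαβ (fun x => - Z x) B (by simpa using hB)
    (hZ.mono fun x h => by linarith) hε
  filter_upwards [renewal_upper hα hβ hαβ Z B hB hZ hε, h2] with x h1 h2
  rw [Real.dist_eq, sub_zero, abs_lt]
  constructor <;> linarith

/-! ### The counting function -/

lemma le_count {α β : ℝ} (hα : 0 < α) (hβ : 0 < β) (hαβ : α + β = 1) {N : ℝ → ℝ}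
    (hN1 : ∀ x, x < 1 → N x = 1) (hN2 : ∀ x, 1 ≤ x → N x = N (α * x) + N (β * x)) (x : ℝ) :
    x ≤ N x ∧ 1 ≤ N x := by
  refine splitInd (fun x => x) (fun x => α * x) (fun x => β * x) hα hβ hαβ (fun _ => rfl)
    (fun _ => rfl) (fun x => x ≤ N x ∧ 1 ≤ N x) ?_ ?_ x
  · intro x hx
    rw [hN1 x hx]
    exact ⟨hx.le, le_rfl⟩
  · intro x hx h1 h2
    rw [hN2 x hx]
    refine ⟨?_, by linarith [h1.2, h2.2]⟩
    have : x = α * x + β * x := by rw [← add_mul, hαβ, one_mul]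
    linarith [h1.1, h2.1]

lemma count_le {α β : ℝ} (hα : 0 < α) (hβ : 0 < β) (hαβ : α + β = 1) {N : ℝ → ℝ}
    (hN1 : ∀ x, x < 1 → N x = 1) (hN2 : ∀ x, 1 ≤ x → N x = N (α * x) + N (β * x)) (x : ℝ) :
    min α β ≤ x → N x ≤ x / min α β := by
  have hμ : 0 < min α β := lt_min hα hβ
  refine splitInd (fun x => x) (fun x => α * x) (fun x => β * x) hα hβ hαβ (fun _ => rfl)
    (fun _ => rfl) (fun x => min α β ≤ x → N x ≤ x / min α β) ?_ ?_ x
  · intro x hx h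
    rw [hN1 x hx]
    rwa [le_div_iff₀ hμ, one_mul]
  · intro x hx h1 h2 _
    rw [hN2 x hx]
    have a1 := h1 (by nlinarith [min_le_left α β])
    have a2 := h2 (by nlinarith [min_le_right α β])
    have : x / min α β = α * x / min α β + β * x / min α β := by
      rw [← add_div, ← add_mul, hαβ, one_mul]
    linarith

/-- The renewal theorem for the counting function, along the multiplicative step `α`. -/
lemma count_ratio_tendsto {α β : ℝ} (hα : 0 < α) (hβ : 0 < β) (hαβ : α + β = 1) {N : ℝ → ℝ}
    (hN1 : ∀ x, x < 1 → N x = 1) (hN2 : ∀ x, 1 ≤ x → N x = N (α * x) + N (β * x)) :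
    Tendsto (fun x => N (α * x) / N x) atTop (𝓝 α) := by
  have hμ : 0 < min α β := lt_min hα hβ
  have hle := le_count hα hβ hαβ hN1 hN2
  have hge := count_le hα hβ hαβ hN1 hN2
  have hB : ∀ᶠ x : ℝ in atTop, |N x / x| ≤ 1 / min α β := by
    filter_upwards [eventually_ge_atTop 1] with x hx
    have h1 := hge x (by linarith [min_le_left α β])
    have h2 := (hle x).2
    rw [abs_of_nonneg (by positivity), div_le_iff₀ (by linarith)]
    calc N x ≤ _ := h1
      _ = _ := by ring
  have hZ : ∀ᶠ x : ℝ in atTop,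
      N x / x = α * (N (α * x) / (α * x)) + β * (N (β * x) / (β * x)) := by
    filter_upwards [eventually_ge_atTop 1] with x hx
    rw [hN2 x hx]
    have : x ≠ 0 := by linarith
    field_simp
  have hD := renewal_tendsto hα hβ hαβ (fun x => N x / x) _ hB hZ
  rw [tendsto_iff_norm_sub_tendsto_zero]
  -- `N (α x) / N x - α = α (Z (α x) - Z x) / Z x`, and `Z x ≥ 1`.
  refine squeeze_zero' (Eventually.of_forall fun _ => norm_nonneg _) ?_ (by simpa using hD.norm)
  filter_upwards [eventually_ge_atTop 1] with x hx
  have hx0 : 0 < x := by linarith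
  have hNx : 0 < N x := by linarith [(hle x).2]
  have hid : N (α * x) / N x - α = (N x / x - N (α * x) / (α * x)) * (-(α * (x / N x))) := by
    field_simp
    ring
  rw [hid, norm_mul]
  have : ‖-(α * (x / N x))‖ ≤ 1 := by
    rw [norm_neg, Real.norm_eq_abs, abs_of_nonneg (by positivity)]
    have : x / N x ≤ 1 := (div_le_one hNx).2 (hle x).1
    have : 0 ≤ x / N x := by positivity
    nlinarith
  simpa using mul_le_mul_of_nonneg_left this (norm_nonneg (N x / x - N (α * x) / (α * x)))

/-- Ratio limits of the counting function compose. -/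
lemma ratio_mul {N : ℝ → ℝ} (hpos : ∀ x, 0 < N x) {a c : ℝ} (hc : 0 < c)
    (ha : Tendsto (fun x => N (a * x) / N x) atTop (𝓝 a))
    (hc' : Tendsto (fun x => N (c * x) / N x) atTop (𝓝 c)) :
    Tendsto (fun x => N (a * c * x) / N x) atTop (𝓝 (a * c)) := by
  have t : Tendsto (fun x : ℝ => c * x) atTop atTop := tendsto_id.const_mul_atTop hc
  refine ((ha.comp t).mul hc').congr fun x => ?_
  simp only [Function.comp]
  have := (hpos (c * x)).ne'
  rw [mul_assoc]
  field_simp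

/-! ### One step of the splitting procedure -/

/-- The members of `P` are nondegenerate subintervals of `[0,1]` with disjoint interiors. -/
def KakGood (P : Finset (ℝ × ℝ)) : Prop :=
  (∀ p ∈ P, 0 ≤ p.1 ∧ p.1 < p.2 ∧ p.2 ≤ 1) ∧
    ∀ p ∈ P, ∀ q ∈ P, p ≠ q → p.2 ≤ q.1 ∨ q.2 ≤ p.1

lemma kakSplit_sub {α : ℝ} (hα : α ∈ Set.Ioo (0 : ℝ) 1) {p q : ℝ × ℝ} (hp : p.1 < p.2)
    (hq : q ∈ kakSplit α p) : p.1 ≤ q.1 ∧ q.1 < q.2 ∧ q.2 ≤ p.2 := by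
  obtain ⟨h0, h1⟩ := hα
  have a1 : 0 < α * (p.2 - p.1) := by apply mul_pos h0; linarith
  have a2 : α * (p.2 - p.1) < p.2 - p.1 := by nlinarith
  simp only [kakSplit, Finset.mem_insert, Finset.mem_singleton] at hq
  rcases hq with rfl | rfl <;> refine ⟨?_, ?_, ?_⟩ <;> simp only <;> linarith

lemma kakMax_sub {P : Finset (ℝ × ℝ)} {p : ℝ × ℝ} (hp : p ∈ kakMax P) : p ∈ P :=
  (Finset.mem_filter.1 hp).1

lemma kakGood_step {α : ℝ} (hα : α ∈ Set.Ioo (0 : ℝ) 1) {P : Finset (ℝ × ℝ)} (hP : KakGood P) :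
    KakGood ((P \ kakMax P) ∪ (kakMax P).biUnion (kakSplit α)) := by
  -- Each new interval lies in an old one; two distinct new intervals in the same old one are
  -- the two halves of a split.
  have par : ∀ q ∈ (P \ kakMax P) ∪ (kakMax P).biUnion (kakSplit α), ∃ p ∈ P,
      (p.1 ≤ q.1 ∧ q.1 < q.2 ∧ q.2 ≤ p.2) ∧
        ((p ∉ kakMax P ∧ q = p) ∨ (p ∈ kakMax P ∧ q ∈ kakSplit α p)) := by
    intro q hq
    simp only [Finset.mem_union, Finset.mem_sdiff, Finset.mem_biUnion] at hq
    rcases hq with ⟨h1, h2⟩ | ⟨p, hp, hq⟩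
    · exact ⟨q, h1, ⟨le_rfl, (hP.1 q h1).2.1, le_rfl⟩, Or.inl ⟨h2, rfl⟩⟩
    · exact ⟨p, kakMax_sub hp, kakSplit_sub hα (hP.1 p (kakMax_sub hp)).2.1 hq, Or.inr ⟨hp, hq⟩⟩
  refine ⟨fun q hq => ?_, fun q hq q' hq' hne => ?_⟩
  · obtain ⟨p, hp, ⟨h1, h2, h3⟩, -⟩ := par q hq
    obtain ⟨h4, h5, h6⟩ := hP.1 p hp
    exact ⟨by linarith, h2, by linarith⟩
  · obtain ⟨p, hp, ⟨h1, h2, h3⟩, h⟩ := par q hq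
    obtain ⟨p', hp', ⟨h1', h2', h3'⟩, h'⟩ := par q' hq'
    by_cases hpp : p = p'
    · subst hpp
      rcases h with ⟨hn, rfl⟩ | ⟨hm, hs⟩
      · rcases h' with ⟨_, rfl⟩ | ⟨hm, _⟩
        · exact absurd rfl hne
        · exact absurd hm hn
      · rcases h' with ⟨hn, _⟩ | ⟨_, hs'⟩
        · exact absurd hm hn
        · simp only [kakSplit, Finset.mem_insert, Finset.mem_singleton] at hs hs'
          rcases hs with rfl | rfl <;> rcases hs' with rfl | rfl
          · exact absurd rfl hne
          · exact Or.inl le_rfl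
          · exact Or.inr le_rfl
          · exact absurd rfl hne
    · rcases hP.2 p hp p' hp' hpp with h | h
      · left; linarith
      · right; linarith

/-- A sum over the intervals is unchanged by a step if the summand is additive under the splits
performed in that step. -/
lemma sum_step {α : ℝ} (hα : α ∈ Set.Ioo (0 : ℝ) 1) {P : Finset (ℝ × ℝ)} (hP : KakGood P)
    (h : ℝ × ℝ → ℝ)
    (hadd : ∀ p ∈ kakMax P, h p = h (p.1, p.1 + α * (p.2 - p.1)) +
      h (p.1 + α * (p.2 - p.1), p.2)) :
    ∑ p ∈ (P \ kakMax P) ∪ (kakMax P).biUnion (kakSplit α), h p = ∑ p ∈ P, h p := by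
  have hsplit : ∀ p ∈ kakMax P, ∑ q ∈ kakSplit α p, h q = h p := by
    intro p hp
    rw [hadd p hp, kakSplit, Finset.sum_pair]
    intro heq
    have h1 := (hP.1 p (kakMax_sub hp)).2.1
    have h2 : p.1 = p.1 + α * (p.2 - p.1) := congrArg Prod.fst heq
    have : 0 < α * (p.2 - p.1) := mul_pos hα.1 (by linarith)
    linarith
  rw [Finset.sum_union, Finset.sum_biUnion, Finset.sum_congr rfl hsplit]
  · exact Finset.sum_sdiff (Finset.filter_subset _ _)
  · intro p hp p' hp' hne
    simp only [Finset.mem_coe] at hp hp'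
    rw [Function.onFun, Finset.disjoint_left]
    intro q hq hq'
    obtain ⟨a1, a2, a3⟩ := kakSplit_sub hα (hP.1 p (kakMax_sub hp)).2.1 hq
    obtain ⟨b1, b2, b3⟩ := kakSplit_sub hα (hP.1 p' (kakMax_sub hp')).2.1 hq'
    rcases hP.2 p (kakMax_sub hp) p' (kakMax_sub hp') hne with h | h <;> linarith
  · rw [Finset.disjoint_left]
    intro q hq hq'
    simp only [Finset.mem_sdiff, Finset.mem_biUnion] at hq hq'
    obtain ⟨p, hp, hqp⟩ := hq'
    obtain ⟨a1, a2, a3⟩ := kakSplit_sub hα (hP.1 p (kakMax_sub hp)).2.1 hqp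
    have hne : q ≠ p := fun e => hq.2 (e ▸ hp)
    rcases hP.2 q hq.1 p (kakMax_sub hp) hne with h | h <;> linarith

/-! ### The sequence of partitions -/

section Sequence

variable {α : ℝ} {π : ℕ → Finset (ℝ × ℝ)}

lemma kakGood_seq (hα : α ∈ Set.Ioo (0 : ℝ) 1) (h0 : π 0 = {((0 : ℝ), (1 : ℝ))})
    (hstep : ∀ m, π (m + 1) = (π m \ kakMax (π m)) ∪ (kakMax (π m)).biUnion (kakSplit α))
    (m : ℕ) : KakGood (π m) := by
  induction m with
  | zero =>
    rw [h0]
    refine ⟨fun p hp => ?_, fun p hp q hq hne => ?_⟩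
    · rw [Finset.mem_singleton] at hp
      subst hp
      norm_num
    · rw [Finset.mem_singleton] at hp hq
      exact absurd (hp.trans hq.symm) hne
  | succ m ih =>
    rw [hstep]
    exact kakGood_step hα ih

lemma sum_seq_add (hα : α ∈ Set.Ioo (0 : ℝ) 1) (h0 : π 0 = {((0 : ℝ), (1 : ℝ))})
    (hstep : ∀ m, π (m + 1) = (π m \ kakMax (π m)) ∪ (kakMax (π m)).biUnion (kakSplit α))
    (h : ℝ × ℝ → ℝ)
    (hadd : ∀ p : ℝ × ℝ, h p = h (p.1, p.1 + α * (p.2 - p.1)) +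
      h (p.1 + α * (p.2 - p.1), p.2)) (m : ℕ) : ∑ p ∈ π m, h p = h (0, 1) := by
  induction m with
  | zero => rw [h0, Finset.sum_singleton]
  | succ m ih =>
    rw [hstep, sum_step hα (kakGood_seq hα h0 hstep m) h fun p _ => hadd p, ih]

/-- If `π n` has an interval of length at least `t`, so has every earlier partition. -/
lemma coarse_anti (hα : α ∈ Set.Ioo (0 : ℝ) 1) (h0 : π 0 = {((0 : ℝ), (1 : ℝ))})
    (hstep : ∀ m, π (m + 1) = (π m \ kakMax (π m)) ∪ (kakMax (π m)).biUnion (kakSplit α))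
    (t : ℝ) {m n : ℕ} (hmn : m ≤ n) (hn : ∃ p ∈ π n, t ≤ p.2 - p.1) :
    ∃ p ∈ π m, t ≤ p.2 - p.1 := by
  induction n, hmn using Nat.le_induction with
  | base => exact hn
  | succ n _ ih =>
    apply ih
    obtain ⟨q, hq, hqt⟩ := hn
    rw [hstep] at hq
    simp only [Finset.mem_union, Finset.mem_sdiff, Finset.mem_biUnion] at hq
    rcases hq with ⟨h1, -⟩ | ⟨p, hp, hq⟩
    · exact ⟨q, h1, hqt⟩
    · have hp' := kakMax_sub hp
      obtain ⟨a1, a2, a3⟩ :=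
        kakSplit_sub hα ((kakGood_seq hα h0 hstep n).1 p hp').2.1 hq
      exact ⟨p, hp', by linarith⟩

/-- Sums of a function which is additive on intervals of length at least `t` stay constant as long
as such intervals exist, because then all intervals being split are of this kind. -/
lemma sum_seq_coarse (hα : α ∈ Set.Ioo (0 : ℝ) 1) (h0 : π 0 = {((0 : ℝ), (1 : ℝ))})
    (hstep : ∀ m, π (m + 1) = (π m \ kakMax (π m)) ∪ (kakMax (π m)).biUnion (kakSplit α))
    (t : ℝ) (h : ℝ × ℝ → ℝ)
    (hadd : ∀ p : ℝ × ℝ, t ≤ p.2 - p.1 → h p = h (p.1, p.1 + α * (p.2 - p.1)) +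
      h (p.1 + α * (p.2 - p.1), p.2)) {M n : ℕ} (hMn : M ≤ n)
    (hn : ∃ p ∈ π n, t ≤ p.2 - p.1) : ∑ p ∈ π (n + 1), h p = ∑ p ∈ π M, h p := by
  have one : ∀ m ≤ n, ∑ p ∈ π (m + 1), h p = ∑ p ∈ π m, h p := by
    intro m hm
    rw [hstep, sum_step hα (kakGood_seq hα h0 hstep m) h]
    intro p hp
    obtain ⟨q, hq, hqt⟩ := coarse_anti hα h0 hstep t hm hn
    exact hadd p (hqt.trans ((Finset.mem_filter.1 hp).2 q hq))
  induction n, hMn using Nat.le_induction with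
  | base => exact one M le_rfl
  | succ n hMn ih =>
    rw [one (n + 1) le_rfl]
    exact ih (coarse_anti hα h0 hstep t (Nat.le_succ n) hn) fun m hm => one m (by omega)

lemma seq_nonempty (hα : α ∈ Set.Ioo (0 : ℝ) 1) (h0 : π 0 = {((0 : ℝ), (1 : ℝ))})
    (hstep : ∀ m, π (m + 1) = (π m \ kakMax (π m)) ∪ (kakMax (π m)).biUnion (kakSplit α))
    (m : ℕ) : (π m).Nonempty := by
  rw [Finset.nonempty_iff_ne_empty]
  intro he
  have := sum_seq_add hα h0 hstep (fun p => p.2 - p.1) (fun p => by ring) m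
  simp [he] at this

lemma exists_max (hα : α ∈ Set.Ioo (0 : ℝ) 1) (h0 : π 0 = {((0 : ℝ), (1 : ℝ))})
    (hstep : ∀ m, π (m + 1) = (π m \ kakMax (π m)) ∪ (kakMax (π m)).biUnion (kakSplit α))
    (m : ℕ) : ∃ p, p ∈ kakMax (π m) := by
  obtain ⟨p, hp, hmax⟩ :=
    Finset.exists_max_image (π m) (fun p => p.2 - p.1) (seq_nonempty hα h0 hstep m)
  exact ⟨p, Finset.mem_filter.2 ⟨hp, hmax⟩⟩

/-- After splitting, all intervals are shorter than the previous maximal length. -/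
lemma lt_of_max (hα : α ∈ Set.Ioo (0 : ℝ) 1) (h0 : π 0 = {((0 : ℝ), (1 : ℝ))})
    (hstep : ∀ m, π (m + 1) = (π m \ kakMax (π m)) ∪ (kakMax (π m)).biUnion (kakSplit α))
    (m : ℕ) {p q : ℝ × ℝ} (hp : p ∈ kakMax (π m)) (hq : q ∈ π (m + 1)) :
    q.2 - q.1 < p.2 - p.1 := by
  have hpm := (Finset.mem_filter.1 hp).2
  rw [hstep] at hq
  simp only [Finset.mem_union, Finset.mem_sdiff, Finset.mem_biUnion] at hq
  rcases hq with ⟨h1, h2⟩ | ⟨r, hr, hq⟩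
  · by_contra hlt
    push Not at hlt
    exact h2 (Finset.mem_filter.2 ⟨h1, fun s hs => (hpm s hs).trans hlt⟩)
  · have h1 := hpm r (kakMax_sub hr)
    have h2 := ((kakGood_seq hα h0 hstep m).1 r (kakMax_sub hr)).2.1
    obtain ⟨a0, a1⟩ := hα
    have a2 : 0 < α * (r.2 - r.1) := mul_pos a0 (by linarith)
    have a3 : α * (r.2 - r.1) < r.2 - r.1 := by nlinarith
    simp only [kakSplit, Finset.mem_insert, Finset.mem_singleton] at hq
    rcases hq with rfl | rfl <;> simp only <;> linarith

lemma card_step (hα : α ∈ Set.Ioo (0 : ℝ) 1) (h0 : π 0 = {((0 : ℝ), (1 : ℝ))})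
    (hstep : ∀ m, π (m + 1) = (π m \ kakMax (π m)) ∪ (kakMax (π m)).biUnion (kakSplit α))
    (m : ℕ) : m + 1 ≤ (π m).card := by
  classical
  induction m with
  | zero => simp [h0]
  | succ m ih =>
    obtain ⟨p, hp⟩ := exists_max hα h0 hstep m
    -- Keeping each unsplit interval and mapping each split one to its left piece injects `π m`
    -- into `π (m + 1)`; the right piece of `p` is not in the image.
    have hg := kakGood_seq hα h0 hstep m
    let φ : ℝ × ℝ → ℝ × ℝ := fun q =>
      if q ∈ kakMax (π m) then (q.1, q.1 + α * (q.2 - q.1)) else q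
    have hφ1 : ∀ q, (φ q).1 = q.1 := by
      intro q
      simp only [φ]
      split_ifs <;> rfl
    have hinj : ∀ q ∈ π m, ∀ q' ∈ π m, q.1 = q'.1 → q = q' := by
      intro q hq q' hq' he
      by_contra hne
      have := hg.1 q hq
      have := hg.1 q' hq'
      rcases hg.2 q hq q' hq' hne with h | h <;> linarith
    have hlt : ((π m).image φ).card < (π (m + 1)).card := by
      apply Finset.card_lt_card
      rw [Finset.ssubset_iff]
      have hpl := hg.1 p (kakMax_sub hp)
      have hcut1 : 0 < α * (p.2 - p.1) := mul_pos hα.1 (by linarith)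
      have hcut2 : α * (p.2 - p.1) < p.2 - p.1 := by nlinarith [hα.2]
      refine ⟨(p.1 + α * (p.2 - p.1), p.2), ?_, ?_⟩
      · rw [Finset.mem_image]
        rintro ⟨q, hq, he⟩
        have h1 : q.1 = p.1 + α * (p.2 - p.1) := by
          rw [← hφ1 q, he]
        have hql := hg.1 q hq
        have hne : q ≠ p := by
          rintro rfl
          linarith
        rcases hg.2 q hq p (kakMax_sub hp) hne with h | h <;> linarith
      · rw [hstep]
        intro q hq
        rw [Finset.mem_insert] at hq
        simp only [Finset.mem_union, Finset.mem_sdiff, Finset.mem_biUnion]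
        rcases hq with rfl | hq
        · exact Or.inr ⟨p, hp, by simp [kakSplit]⟩
        · obtain ⟨r, hr, rfl⟩ := Finset.mem_image.1 hq
          simp only [φ]
          split_ifs with h
          · exact Or.inr ⟨r, h, by simp [kakSplit]⟩
          · exact Or.inl ⟨hr, h⟩
    rw [Finset.card_image_of_injOn] at hlt
    · omega
    · intro q hq q' hq' he
      exact hinj q hq q' hq' (by rw [← hφ1 q, ← hφ1 q', he])

lemma mesh_tendsto (hα : α ∈ Set.Ioo (0 : ℝ) 1) (h0 : π 0 = {((0 : ℝ), (1 : ℝ))})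
    (hstep : ∀ m, π (m + 1) = (π m \ kakMax (π m)) ∪ (kakMax (π m)).biUnion (kakSplit α))
    {N : ℝ → ℝ} (hN1 : ∀ x, x < 1 → N x = 1)
    (hN2 : ∀ x, 1 ≤ x → N x = N (α * x) + N ((1 - α) * x)) {t : ℝ} (ht : 0 < t) :
    ∃ M, ∀ m ≥ M, ∀ p ∈ π m, p.2 - p.1 < t := by
  by_contra hcon
  push Not at hcon
  obtain ⟨n, hn⟩ := exists_nat_gt (N (1 / t))
  obtain ⟨m, hm, hc⟩ := hcon n
  have hc' := coarse_anti hα h0 hstep t hm hc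
  have hsum := sum_seq_coarse hα h0 hstep t (fun p => N ((p.2 - p.1) / t)) (fun p hp => by
    simp only
    rw [hN2 _ ((one_le_div ht).2 hp)]
    congr 2 <;> ring) (Nat.zero_le n) hc'
  rw [h0, Finset.sum_singleton] at hsum
  have hcard : ((π (n + 1)).card : ℝ) ≤ ∑ p ∈ π (n + 1), N ((p.2 - p.1) / t) := by
    rw [Finset.card_eq_sum_ones, Nat.cast_sum]
    refine Finset.sum_le_sum fun p _ => ?_
    simpa using (le_count hα.1 (sub_pos.2 hα.2) (by ring) hN1 hN2 ((p.2 - p.1) / t)).2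
  have h1 : ((n + 1 + 1 : ℕ) : ℝ) ≤ ((π (n + 1)).card : ℝ) :=
    Nat.cast_le.2 (card_step hα h0 hstep (n + 1))
  push_cast at h1
  simp only [sub_zero] at hsum
  linarith

/-- All lengths which occur satisfy the ratio limit theorem. -/
lemma ratio_seq (hα : α ∈ Set.Ioo (0 : ℝ) 1) (h0 : π 0 = {((0 : ℝ), (1 : ℝ))})
    (hstep : ∀ m, π (m + 1) = (π m \ kakMax (π m)) ∪ (kakMax (π m)).biUnion (kakSplit α))
    {N : ℝ → ℝ} (hN1 : ∀ x, x < 1 → N x = 1)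
    (hN2 : ∀ x, 1 ≤ x → N x = N (α * x) + N ((1 - α) * x)) (m : ℕ) :
    ∀ p ∈ π m, Tendsto (fun x => N ((p.2 - p.1) * x) / N x) atTop (𝓝 (p.2 - p.1)) := by
  have hβ : 0 < 1 - α := sub_pos.2 hα.2
  have hpos : ∀ x, 0 < N x := fun x =>
    zero_lt_one.trans_le (le_count hα.1 hβ (by ring) hN1 hN2 x).2
  induction m with
  | zero =>
    intro p hp
    rw [h0, Finset.mem_singleton] at hp
    subst hp
    simp only [sub_zero, one_mul]
    exact tendsto_const_nhds.congr fun x => (div_self (hpos x).ne').symm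
  | succ m ih =>
    intro q hq
    rw [hstep] at hq
    simp only [Finset.mem_union, Finset.mem_sdiff, Finset.mem_biUnion] at hq
    rcases hq with ⟨h1, h2⟩ | ⟨p, hp, hq⟩
    · exact ih q h1
    · have hl := ((kakGood_seq hα h0 hstep m).1 p (kakMax_sub hp)).2.1
      have h1 := ratio_mul hpos (sub_pos.2 hl)
        (count_ratio_tendsto hα.1 hβ (by ring) hN1 hN2) (ih p (kakMax_sub hp))
      have h2 := ratio_mul hpos (sub_pos.2 hl)
        (count_ratio_tendsto hβ hα.1 (by ring) hN1 (fun x hx => by rw [hN2 x hx, add_comm]))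
        (ih p (kakMax_sub hp))
      simp only [kakSplit, Finset.mem_insert, Finset.mem_singleton] at hq
      rcases hq with rfl | rfl
      · convert h1 using 4 <;> ring
      · convert h2 using 4 <;> ring

/-- Up to an error of `ε` per point, the sum of `f` over the points of a fine partition is the sum over
the points of a coarser one, each weighted with the number of points it is replaced by. -/
lemma sum_approx (hα : α ∈ Set.Ioo (0 : ℝ) 1) (h0 : π 0 = {((0 : ℝ), (1 : ℝ))})
    (hstep : ∀ m, π (m + 1) = (π m \ kakMax (π m)) ∪ (kakMax (π m)).biUnion (kakSplit α))
    {N : ℝ → ℝ} (hN1 : ∀ x, x < 1 → N x = 1)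
    (hN2 : ∀ x, 1 ≤ x → N x = N (α * x) + N ((1 - α) * x)) (f : ℝ → ℝ) {ε : ℝ} {M n : ℕ}
    (hosc : ∀ p ∈ π M, ∀ x ∈ Set.Icc p.1 p.2, |f x - f p.2| ≤ ε) (hMn : M ≤ n)
    {p : ℝ × ℝ} (hp : p ∈ kakMax (π n)) :
    ((π (n + 1)).card : ℝ) = N (1 / (p.2 - p.1)) ∧
      |∑ q ∈ π (n + 1), f q.2 - ∑ q ∈ π M, f q.2 * N ((q.2 - q.1) / (p.2 - p.1))| ≤
        ε * N (1 / (p.2 - p.1)) := by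
  have hβ : 0 < 1 - α := sub_pos.2 hα.2
  have hp1 := ((kakGood_seq hα h0 hstep n).1 p (kakMax_sub hp)).2.1
  set t := p.2 - p.1 with ht_def
  have ht : 0 < t := sub_pos.2 hp1
  have hcoarse : ∃ q ∈ π n, t ≤ q.2 - q.1 := ⟨p, kakMax_sub hp, le_rfl⟩
  have hsmall : ∀ q ∈ π (n + 1), (q.2 - q.1) / t < 1 := fun q hq =>
    (div_lt_one ht).2 (lt_of_max hα h0 hstep n hp hq)
  have hNadd : ∀ p : ℝ × ℝ, t ≤ p.2 - p.1 → N ((p.2 - p.1) / t) =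
      N ((p.1 + α * (p.2 - p.1) - p.1) / t) + N ((p.2 - (p.1 + α * (p.2 - p.1))) / t) := by
    intro p hp
    rw [hN2 _ ((one_le_div ht).2 hp)]
    congr 2 <;> ring
  have hcard : ((π (n + 1)).card : ℝ) = ∑ q ∈ π (n + 1), N ((q.2 - q.1) / t) := by
    rw [Finset.sum_congr rfl fun q hq => hN1 _ (hsmall q hq)]
    simp
  have hc0 : ((π (n + 1)).card : ℝ) = N (1 / t) := by
    rw [hcard, sum_seq_coarse hα h0 hstep t (fun p => N ((p.2 - p.1) / t)) hNadd
      (Nat.zero_le n) hcoarse, h0, Finset.sum_singleton]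
    simp
  have hcM : N (1 / t) = ∑ q ∈ π M, N ((q.2 - q.1) / t) := by
    rw [← hc0, hcard]
    exact sum_seq_coarse hα h0 hstep t (fun p => N ((p.2 - p.1) / t)) hNadd hMn hcoarse
  refine ⟨hc0, ?_⟩
  have hl : ∀ p : ℝ × ℝ, (p.1 + α * (p.2 - p.1) - p.1) / t = α * ((p.2 - p.1) / t) := by
    intro p; ring
  have hr : ∀ p : ℝ × ℝ, (p.2 - (p.1 + α * (p.2 - p.1))) / t = (1 - α) * ((p.2 - p.1) / t) := by
    intro p; ring
  -- `V p` is the sum of `f` over the right endpoints of the pieces of `p` of length below `t`.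
  obtain ⟨V, hV1, hV2⟩ := exists_splitRec (fun p : ℝ × ℝ => (p.2 - p.1) / t)
    (fun p => (p.1, p.1 + α * (p.2 - p.1))) (fun p => (p.1 + α * (p.2 - p.1), p.2))
    (fun p => f p.2) hα.1 hβ (by ring) hl hr
  have hVsum : ∑ q ∈ π (n + 1), f q.2 = ∑ q ∈ π M, V q := by
    rw [← sum_seq_coarse hα h0 hstep t V (fun p hp => hV2 p ((one_le_div ht).2 hp)) hMn hcoarse]
    exact Finset.sum_congr rfl fun q hq => (hV1 q (hsmall q hq)).symm
  have hVest : ∀ q ∈ π M, |V q - f q.2 * N ((q.2 - q.1) / t)| ≤ ε * N ((q.2 - q.1) / t) := by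
    intro q hq
    have hq1 := ((kakGood_seq hα h0 hstep M).1 q hq).2.1
    have main : ∀ s : ℝ × ℝ, q.1 ≤ s.1 → s.1 < s.2 → s.2 ≤ q.2 →
        |V s - f q.2 * N ((s.2 - s.1) / t)| ≤ ε * N ((s.2 - s.1) / t) := by
      refine splitInd (fun p : ℝ × ℝ => (p.2 - p.1) / t)
        (fun p => (p.1, p.1 + α * (p.2 - p.1))) (fun p => (p.1 + α * (p.2 - p.1), p.2))
        hα.1 hβ (by ring) hl hr _ ?_ ?_
      · intro s hs h1 h2 h3
        rw [hV1 s hs, hN1 _ hs, mul_one, mul_one]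
        exact hosc q hq s.2 ⟨by linarith, h3⟩
      · intro s hs i1 i2 h1 h2 h3
        have a2 : 0 < α * (s.2 - s.1) := mul_pos hα.1 (by linarith)
        have a3 : α * (s.2 - s.1) < s.2 - s.1 := by nlinarith [hα.2]
        have j1 := i1 h1 (by simp only; linarith) (by simp only; linarith)
        have j2 := i2 (by simp only; linarith) (by simp only; linarith) h3
        rw [hV2 s hs, hNadd s ((one_le_div ht).1 hs), mul_add, mul_add]
        rw [abs_le] at *
        constructor <;> linarith [j1.1, j1.2, j2.1, j2.2]
    exact main q le_rfl hq1 le_rfl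
  rw [hVsum, ← Finset.sum_sub_distrib, hcM, Finset.mul_sum]
  exact (Finset.abs_sum_le_sum_abs _ _).trans (Finset.sum_le_sum hVest)

lemma riemann_approx (hα : α ∈ Set.Ioo (0 : ℝ) 1) (h0 : π 0 = {((0 : ℝ), (1 : ℝ))})
    (hstep : ∀ m, π (m + 1) = (π m \ kakMax (π m)) ∪ (kakMax (π m)).biUnion (kakSplit α))
    {f : ℝ → ℝ} (hf : Continuous f) {ε : ℝ} {M : ℕ}
    (hosc : ∀ p ∈ π M, ∀ x ∈ Set.Icc p.1 p.2, |f x - f p.2| ≤ ε) :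
    |∑ q ∈ π M, f q.2 * (q.2 - q.1) - ∫ t in (0 : ℝ)..1, f t| ≤ ε := by
  have hI := sum_seq_add hα h0 hstep (fun p => ∫ t in p.1..p.2, f t) (fun p =>
    (intervalIntegral.integral_add_adjacent_intervals (hf.intervalIntegrable _ _)
      (hf.intervalIntegrable _ _)).symm) M
  have hL := sum_seq_add hα h0 hstep (fun p => p.2 - p.1) (fun p => by ring) M
  simp only [sub_zero] at hI hL
  rw [← hI, ← Finset.sum_sub_distrib]
  calc _ ≤ ∑ q ∈ π M, |f q.2 * (q.2 - q.1) - ∫ t in q.1..q.2, f t| :=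
        Finset.abs_sum_le_sum_abs _ _
    _ ≤ ∑ q ∈ π M, ε * (q.2 - q.1) := by
        refine Finset.sum_le_sum fun q hq => ?_
        have hq1 := ((kakGood_seq hα h0 hstep M).1 q hq).2.1
        have e : f q.2 * (q.2 - q.1) - ∫ t in q.1..q.2, f t =
            -∫ t in q.1..q.2, (f t - f q.2) := by
          rw [intervalIntegral.integral_sub (hf.intervalIntegrable _ _) (by simp)]
          simp
          ring
        rw [e, abs_neg]
        have := intervalIntegral.norm_integral_le_of_norm_le_const (a := q.1) (b := q.2)
          (f := fun t => f t - f q.2) (C := ε) (fun x hx => by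
            rw [Set.uIoc_of_le hq1.le] at hx
            exact hosc q hq x ⟨hx.1.le, hx.2⟩)
        rwa [abs_of_pos (sub_pos.2 hq1)] at this
    _ = ε := by rw [← Finset.mul_sum, hL, mul_one]

lemma kakutani_of_continuous (hα : α ∈ Set.Ioo (0 : ℝ) 1) (h0 : π 0 = {((0 : ℝ), (1 : ℝ))})
    (hstep : ∀ m, π (m + 1) = (π m \ kakMax (π m)) ∪ (kakMax (π m)).biUnion (kakSplit α))
    {f : ℝ → ℝ} (hf : Continuous f) :
    Tendsto (fun m => (∑ p ∈ π m, f p.2) / ((π m).card : ℝ)) atTop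
      (𝓝 (∫ t in (0 : ℝ)..1, f t)) := by
  have hβ : 0 < 1 - α := sub_pos.2 hα.2
  obtain ⟨N, hN1, hN2⟩ := exists_splitRec (fun x : ℝ => x) (fun x => α * x)
    (fun x => (1 - α) * x) (fun _ => 1) hα.1 hβ (by ring) (fun _ => rfl) (fun _ => rfl)
  have hpos : ∀ x, 0 < N x := fun x =>
    zero_lt_one.trans_le (le_count hα.1 hβ (by ring) hN1 hN2 x).2
  rw [← tendsto_add_atTop_iff_nat 1]
  choose P hP using exists_max hα h0 hstep
  have hPpos : ∀ n, 0 < (P n).2 - (P n).1 := fun n =>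
    sub_pos.2 ((kakGood_seq hα h0 hstep n).1 _ (kakMax_sub (hP n))).2.1
  -- The reciprocals of the thresholds tend to infinity.
  have hx : Tendsto (fun n => 1 / ((P n).2 - (P n).1)) atTop atTop := by
    rw [tendsto_atTop]
    intro b
    obtain ⟨M, hM⟩ := mesh_tendsto hα h0 hstep hN1 hN2
      (t := 1 / (max b 1)) (by positivity)
    filter_upwards [eventually_ge_atTop M] with n hn
    have h1 := hM n hn _ (kakMax_sub (hP n))
    have h2 : max b 1 < 1 / ((P n).2 - (P n).1) := by
      rw [lt_one_div (by positivity) (hPpos n)]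
      exact h1
    exact (le_max_left b 1).trans h2.le
  rw [Metric.tendsto_atTop']
  intro ε hε
  have hε' : 0 < ε / 4 := by positivity
  have huc := (isCompact_Icc (a := (0 : ℝ)) (b := 1)).uniformContinuousOn_of_continuous
    hf.continuousOn
  rw [Metric.uniformContinuousOn_iff] at huc
  obtain ⟨δ, hδ, huc⟩ := huc (ε / 4) hε'
  obtain ⟨M, hM⟩ := mesh_tendsto hα h0 hstep hN1 hN2 hδ
  have hosc : ∀ p ∈ π M, ∀ x ∈ Set.Icc p.1 p.2, |f x - f p.2| ≤ ε / 4 := by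
    intro p hp x hx
    have h1 := hM M le_rfl p hp
    obtain ⟨g1, g2, g3⟩ := (kakGood_seq hα h0 hstep M).1 p hp
    have := huc x ⟨by linarith [hx.1], by linarith [hx.2]⟩ p.2 ⟨by linarith, g3⟩ (by
      rw [Real.dist_eq, abs_lt]
      constructor <;> linarith [hx.1, hx.2])
    rw [Real.dist_eq] at this
    exact this.le
  have hR := riemann_approx hα h0 hstep hf hosc
  have hlim : Tendsto (fun n => ∑ q ∈ π M, f q.2 *
      (N ((q.2 - q.1) * (1 / ((P n).2 - (P n).1))) / N (1 / ((P n).2 - (P n).1)))) atTop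
      (𝓝 (∑ q ∈ π M, f q.2 * (q.2 - q.1))) :=
    tendsto_finsetSum _ fun q hq =>
      ((ratio_seq hα h0 hstep hN1 hN2 M q hq).comp hx).const_mul (f q.2)
  obtain ⟨K, hK⟩ := Metric.tendsto_atTop'.1 hlim (ε / 4) hε'
  refine ⟨max K M, fun n hn => ?_⟩
  have h1 := hK n ((le_max_left _ _).trans_lt hn)
  obtain ⟨h2, h3⟩ := sum_approx hα h0 hstep hN1 hN2 f hosc ((le_max_right K M).trans hn.le) (hP n)
  set x := 1 / ((P n).2 - (P n).1) with hxdef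
  have h4 : |(∑ q ∈ π (n + 1), f q.2) / N x -
      ∑ q ∈ π M, f q.2 * (N ((q.2 - q.1) * x) / N x)| ≤ ε / 4 := by
    have e : (∑ q ∈ π (n + 1), f q.2) / N x - ∑ q ∈ π M, f q.2 * (N ((q.2 - q.1) * x) / N x) =
        (∑ q ∈ π (n + 1), f q.2 -
          ∑ q ∈ π M, f q.2 * N ((q.2 - q.1) / ((P n).2 - (P n).1))) / N x := by
      rw [sub_div, Finset.sum_div (π M)]
      congr 1
      refine Finset.sum_congr rfl fun q _ => ?_
      rw [hxdef, mul_one_div, mul_div_assoc]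
    rw [e, abs_div, abs_of_pos (hpos x), div_le_iff₀ (hpos x)]
    exact h3
  rw [h2, Real.dist_eq]
  rw [Real.dist_eq] at h1
  rw [abs_lt] at h1 ⊢
  rw [abs_le] at hR h4
  constructor <;> linarith [h1.1, h1.2, hR.1, hR.2, h4.1, h4.2]

end Sequence

/-- **Kakutani's theorem.** Fix `α ∈ (0,1)` and let `{π_m}` be the α-Kakutani sequence
of partitions of `[0,1]`: `π_0 = {[0,1]}`, and `π_m` is obtained from `π_{m−1}` by
splitting every interval of maximal length in proportion `α : (1 − α)`. Then for every
continuous `f : [0,1] → ℝ`, the averages of `f` over the right endpoints of the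
intervals of `π_m` converge to `∫_0^1 f(t) dt`. -/
theorem kakutani_alpha_uniformly_distributed (α : ℝ) (hα : α ∈ Set.Ioo (0 : ℝ) 1)
    (π : ℕ → Finset (ℝ × ℝ))
    (h0 : π 0 = {((0 : ℝ), (1 : ℝ))})
    (hstep : ∀ m, π (m + 1) =
      (π m \ kakMax (π m)) ∪ (kakMax (π m)).biUnion (kakSplit α))
    (f : ℝ → ℝ) (hf : ContinuousOn f (Set.Icc 0 1)) :
    Tendsto (fun m => (∑ p ∈ π m, f p.2) / ((π m).card : ℝ)) atTop
      (𝓝 (∫ t in (0 : ℝ)..1, f t)) := by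
  -- Only the values of `f` on `[0,1]` matter, so `f` may be extended continuously to `ℝ`.
  have hc : Continuous (Set.IccExtend (zero_le_one' ℝ) (Set.domRestrict (Set.Icc 0 1) f)) :=
    (continuousOn_iff_continuous_domRestrict.1 hf).Icc_extend'
  have hext : ∀ x ∈ Set.Icc (0 : ℝ) 1,
      Set.IccExtend (zero_le_one' ℝ) (Set.domRestrict (Set.Icc 0 1) f) x = f x := fun x hx => by
    rw [Set.IccExtend_of_mem _ _ hx]
    rfl
  have main := kakutani_of_continuous hα h0 hstep hc
  have hint : ∫ t in (0 : ℝ)..1, Set.IccExtend (zero_le_one' ℝ) (Set.domRestrict (Set.Icc 0 1) f) t =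
      ∫ t in (0 : ℝ)..1, f t :=
    intervalIntegral.integral_congr fun x hx => hext x (by rwa [Set.uIcc_of_le zero_le_one] at hx)
  rw [hint] at main
  refine main.congr fun m => ?_
  congr 1
  refine Finset.sum_congr rfl fun p hp => hext _ ?_
  obtain ⟨h1, h2, h3⟩ := (kakGood_seq hα h0 hstep m).1 p hp
  exact ⟨by linarith, h3⟩
end

section
/- Let σ be an irreducible incommensurable multiscale substitution scheme in ℝ^d, let {π_m} be a Kakutani sequence of partitions of a prototile T_i ∈ τ_σ, and let 1 ≤ r ≤ n. Then the matrix Q_σ has positive entries and all its rows are equal; writing q_h for the common entry in column h of Q_σ, the ratio between the number of tiles of type r in π_m and the total number of tiles of π_m converges, as m → ∞, to [Σ_{h=1}^n q_h · Σ_{k=1}^{k_hr} (1 − (β_hr^(k))^d)] / [Σ_{h,j=1}^n q_h · Σ_{k=1}^{k_hj} (1 − (β_hj^(k))^d)]. -/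
/-! The idea: the tile counts of a Kakutani sequence are path counts in a weighted graph, and these
obey a renewal theorem.

**Graph.** The types are the vertices, and a substitution tile of type `j` in `T i` is an edge from
`i` to `j` of length `-log (β ^ d)`, minus the logarithm of its relative volume
(`MSScheme.graph`). Volume conservation (`MSScheme.sum_beta_pow`) says that `exp (-len e)` is a
transition probability.

**Counting.** If a function of type and logarithmic volume satisfies the renewal equation without
source, its sum over the tiles is conserved as long as only tiles larger than a threshold are
substituted (`IsKakutaniSeq.potential_step`). Taking the largest volume of `π m` as threshold, the
number of tiles of type `r` in `π m` is the number of paths from `i` to `r` whose last edge is the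
first to bring the length to at least `t`, with `t` the logarithm of `vol (T i)` over the largest volume
(`IsKakutaniSeq.countType_eq`). This is a combination of differences of the functions `U h`, where
`U h v t` is the number of paths from `v` to `h` of length less than `t` (`WGraph.leafCount`).
The same potential argument shows `t → ∞` (`IsKakutaniSeq.tendsto_log`).

**Renewal theorem.** By `WGraph.IsCount.tendsto_exp_mul`, `exp (-t) * U h v t` tends to `q h / C`
for a constant `C`, where `q` is stationary. Incommensurability makes the path lengths between any
two vertices eventually `ε`-dense (`WGraph.exists_path_mem_Icc`). Along a filter on which
`exp (-t) * U h v t` converges to its largest cluster value, so do its translates by path lengths,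
hence by all large enough amounts; so the function is nearly constant on long windows. The smallest
cluster value behaves likewise. A conserved weighted integral over a window (`conserved`) forces
both extremal values to be `q h / C`.

**The matrix `Q`.** `M` is an irreducible stochastic matrix. The diagonal cofactors of `1 - s M` do
not vanish for `0 ≤ s ≤ 1` by a maximum principle, so those of `1 - M` are positive by continuity
(`adjugate_diag_pos`). The columns of the adjugate are harmonic, hence constant, and its rows are
stationary. So the rows of `Q` may serve as `q`, and the limits of the normalized counts give the
claimed ratio. -/

open MeasureTheory Filter Topology
open scoped Pointwise

noncomputable section

/-- Euclidean space `ℝ^d`. -/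
abbrev Euc (d : ℕ) : Type := EuclideanSpace ℝ (Fin d)

/-- A tile in `ℝ^d`: a bounded Lebesgue measurable set of positive measure whose
boundary has measure zero. -/
def IsTile {d : ℕ} (T : Set (Euc d)) : Prop :=
  Bornology.IsBounded T ∧ NullMeasurableSet T volume ∧ 0 < volume T ∧
    volume (frontier T) = 0

/-- A multiscale substitution scheme in `ℝ^d` on `n` prototiles `T 1, …, T n`,
with `numSub i j` substitution tiles of type `j` in `ω(T i)`, scaling constants
`scale i j k`, constants of substitution
`β_ij^(k) = (vol T_j / vol T_i)^(1/d) · α_ij^(k) ∈ (0,1)`, and a nonempty family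
of substitution rules, each rule assigning to every prototile `T i` a partition of
`T i` into sets isometric to the substitution tiles `scale i j k • T j`. -/
structure MSScheme (d n : ℕ) where
  T : Fin n → Set (Euc d)
  tile : ∀ i, IsTile (T i)
  numSub : Fin n → Fin n → ℕ
  scale : (i j : Fin n) → Fin (numSub i j) → ℝ
  scale_pos : ∀ i j k, 0 < scale i j k
  beta_pos : ∀ i j k,
    0 < ((volume (T j)).toReal / (volume (T i)).toReal) ^ (1 / (d : ℝ)) * scale i j k
  beta_lt_one : ∀ i j k,
    ((volume (T j)).toReal / (volume (T i)).toReal) ^ (1 / (d : ℝ)) * scale i j k < 1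
  rules : Set ((i j : Fin n) → Fin (numSub i j) → Set (Euc d))
  rules_nonempty : rules.Nonempty
  rules_iso : ∀ ϱ ∈ rules, ∀ i j k, ∃ φ : Euc d ≃ᵢ Euc d,
    ϱ i j k = φ '' (scale i j k • T j)
  rules_disjoint : ∀ ϱ ∈ rules, ∀ i : Fin n, ∀ p q : Σ j : Fin n, Fin (numSub i j),
    p ≠ q → Disjoint (interior (ϱ i p.1 p.2)) (interior (ϱ i q.1 q.2))
  rules_cover : ∀ ϱ ∈ rules, ∀ i : Fin n,
    (⋃ p : Σ j : Fin n, Fin (numSub i j), ϱ i p.1 p.2) = T i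

/-- The constants of substitution `β_ij^(k) = (vol T_j / vol T_i)^(1/d) · α_ij^(k)`. -/
def MSScheme.beta {d n : ℕ} (σ : MSScheme d n) (i j : Fin n)
    (k : Fin (σ.numSub i j)) : ℝ :=
  ((volume (σ.T j)).toReal / (volume (σ.T i)).toReal) ^ (1 / (d : ℝ)) * σ.scale i j k

/-- A labeled tile: a subset of `ℝ^d` together with a type label. -/
structure LTile (d n : ℕ) where
  carrier : Set (Euc d)
  type : Fin n

noncomputable instance {d n : ℕ} : DecidableEq (LTile d n) := Classical.decEq _

/-- `SubstitutesTo σ S P` : the labeled tile `S`, a rescaled isometric copy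
`φ (a • T_{type S})` of the prototile of its type, is partitioned by the collection
`P` obtained by applying some substitution rule of the scheme,
`ϱ(a·φ(T_i)) = a·φ(ϱ(T_i))`, with the types of the pieces given by the scheme. -/
def SubstitutesTo {d n : ℕ} (σ : MSScheme d n) (S : LTile d n)
    (P : Finset (LTile d n)) : Prop :=
  ∃ ϱ ∈ σ.rules, ∃ a : ℝ, 0 < a ∧ ∃ φ : Euc d ≃ᵢ Euc d,
    S.carrier = φ '' (a • σ.T S.type) ∧
    P = Finset.image
      (fun p : Σ j : Fin n, Fin (σ.numSub S.type j) =>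
        (⟨φ '' (a • ϱ S.type p.1 p.2), p.1⟩ : LTile d n)) Finset.univ

open Classical in
/-- The tiles of maximal volume in a partition. -/
def maxTiles {d n : ℕ} (P : Finset (LTile d n)) : Finset (LTile d n) :=
  P.filter fun S => ∀ S' ∈ P, volume S'.carrier ≤ volume S.carrier

/-- A Kakutani sequence of partitions of the prototile `T i`: start with the trivial
partition, and at each step substitute exactly the tiles of maximal volume, each
according to an arbitrarily and independently chosen substitution rule. -/
def IsKakutaniSeq {d n : ℕ} (σ : MSScheme d n) (i : Fin n)
    (π : ℕ → Finset (LTile d n)) : Prop :=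
  π 0 = {(⟨σ.T i, i⟩ : LTile d n)} ∧
  ∀ m, ∃ repl : LTile d n → Finset (LTile d n),
    (∀ S ∈ maxTiles (π m), SubstitutesTo σ S (repl S)) ∧
    π (m + 1) = (π m \ maxTiles (π m)) ∪ (maxTiles (π m)).biUnion repl

/-- A generation sequence of partitions of the prototile `T i`: start with the trivial
partition, and at each step substitute all tiles, each according to an arbitrarily
and independently chosen substitution rule. -/
def IsGenSeq {d n : ℕ} (σ : MSScheme d n) (i : Fin n)
    (δ : ℕ → Finset (LTile d n)) : Prop :=
  δ 0 = {(⟨σ.T i, i⟩ : LTile d n)} ∧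
  ∀ m, ∃ repl : LTile d n → Finset (LTile d n),
    (∀ S ∈ δ m, SubstitutesTo σ S (repl S)) ∧
    δ (m + 1) = (δ m).biUnion repl

/-- A marking sequence of a sequence of partitions of `U`: finite sets of (distinct)
points of `U` such that every tile of the `m`-th partition contains exactly one point
of `x m`. -/
def IsMarking {d n : ℕ} (U : Set (Euc d)) (γ : ℕ → Finset (LTile d n))
    (x : ℕ → Finset (Euc d)) : Prop :=
  ∀ m, (↑(x m) : Set (Euc d)) ⊆ U ∧
    ∀ S ∈ γ m, ∃! p, p ∈ x m ∧ p ∈ S.carrier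

/-- An `r`-marking sequence: finite sets of (distinct) points of `U` such that every
tile of type `r` of the `m`-th partition contains exactly one point of `x m`, and
every point of `x m` lies in a tile of type `r`. -/
def IsRMarking {d n : ℕ} (U : Set (Euc d)) (γ : ℕ → Finset (LTile d n))
    (r : Fin n) (x : ℕ → Finset (Euc d)) : Prop :=
  ∀ m, (↑(x m) : Set (Euc d)) ⊆ U ∧
    (∀ S ∈ γ m, S.type = r → ∃! p, p ∈ x m ∧ p ∈ S.carrier) ∧
    ∀ p ∈ x m, ∃ S ∈ γ m, S.type = r ∧ p ∈ S.carrier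

/-- A sequence of finite sets of points is uniformly distributed in `U` if the
normalized sampling averages of every continuous function converge to its
normalized Lebesgue integral over `U`. -/
def MarkingUD {d : ℕ} (U : Set (Euc d)) (x : ℕ → Finset (Euc d)) : Prop :=
  ∀ f : Euc d → ℝ, ContinuousOn f U →
    Tendsto (fun m => (∑ p ∈ x m, f p) / ((x m).card : ℝ)) atTop
      (𝓝 ((∫ t in U, f t) / (volume U).toReal))

/-- Irreducibility: every type `j` is produced from every prototile `T i` by some
finite (positive) number of substitutions. -/
def MSScheme.Irreducible {d n : ℕ} (σ : MSScheme d n) : Prop :=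
  ∀ i j : Fin n, Relation.TransGen (fun a b => 0 < σ.numSub a b) i j

/-- `σ.IsClosedPathLogVol i a` : some tile of type `i` produced from `T i` by finitely
many substitutions has `log (vol T' / vol T_i) = a`; equivalently, `a` is the sum of
`log ((β_ij^(k))^d)` along some closed path from `i` to `i` in the associated graph. -/
def MSScheme.IsClosedPathLogVol {d n : ℕ} (σ : MSScheme d n)
    (i : Fin n) (a : ℝ) : Prop :=
  ∃ m : ℕ, 0 < m ∧ ∃ p : Fin (m + 1) → Fin n, p 0 = i ∧ p (Fin.last m) = i ∧
    ∃ e : (t : Fin m) → Fin (σ.numSub (p t.castSucc) (p t.succ)),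
      a = ∑ t : Fin m, Real.log (σ.beta (p t.castSucc) (p t.succ) (e t) ^ d)

/-- Incommensurability: there are tiles `T'` of type `i` produced from `T i` and `T''`
of type `j` produced from `T j` with `log (vol T' / vol T_i)` not a rational multiple
of `log (vol T'' / vol T_j)`. -/
def MSScheme.Incommensurable {d n : ℕ} (σ : MSScheme d n) : Prop :=
  ∃ (i j : Fin n) (a b : ℝ), σ.IsClosedPathLogVol i a ∧ σ.IsClosedPathLogVol j b ∧
    ∀ q : ℚ, a ≠ (q : ℝ) * b

/-- The matrix `(M_σ)_ij = Σ_k (β_ij^(k))^d`. -/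
def Mmat {d n : ℕ} (σ : MSScheme d n) : Matrix (Fin n) (Fin n) ℝ :=
  Matrix.of fun i j => ∑ k : Fin (σ.numSub i j), σ.beta i j k ^ d

/-- The matrix `(M'_σ)_ij = Σ_k (β_ij^(k))^d · log β_ij^(k)`. -/
def M'mat {d n : ℕ} (σ : MSScheme d n) : Matrix (Fin n) (Fin n) ℝ :=
  Matrix.of fun i j => ∑ k : Fin (σ.numSub i j), σ.beta i j k ^ d * Real.log (σ.beta i j k)

/-- `Q_σ = adj (I − M_σ) / (− tr (adj (I − M_σ) · M'_σ))`. -/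
def Qmat {d n : ℕ} (σ : MSScheme d n) : Matrix (Fin n) (Fin n) ℝ :=
  (-(Matrix.trace ((1 - Mmat σ).adjugate * M'mat σ)))⁻¹ • (1 - Mmat σ).adjugate

/-- The number of tiles of type `r` in a partition. -/
def countType {d n : ℕ} (P : Finset (LTile d n)) (r : Fin n) : ℕ :=
  (P.filter fun S => S.type = r).card

/-- The union of the tiles of type `r` in a partition. -/
def typeUnion {d n : ℕ} (P : Finset (LTile d n)) (r : Fin n) : Set (Euc d) :=
  ⋃ S ∈ P.filter (fun S => S.type = r), S.carrier

/-- A fixed scale scheme: all scaling constants equal the contraction constant `α`. -/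
def MSScheme.FixedScale {d n : ℕ} (σ : MSScheme d n) (α : ℝ) : Prop :=
  α ∈ Set.Ioo (0 : ℝ) 1 ∧ ∀ i j k, σ.scale i j k = α

/-- The substitution matrix `S_ij = k_ij` (as a real matrix). -/
def Smat {d n : ℕ} (σ : MSScheme d n) : Matrix (Fin n) (Fin n) ℝ :=
  Matrix.of fun i j => (σ.numSub i j : ℝ)

/-- A primitive scheme: some power of the substitution matrix is entrywise positive. -/
def MSScheme.Primitive {d n : ℕ} (σ : MSScheme d n) : Prop :=
  ∃ k : ℕ, ∀ i j, 0 < (Smat σ ^ k) i j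

end
/-! ### Eventual density of a semigroup with two incommensurable generators -/

/-- Two reals `a > 0` and `b` with irrational ratio generate an additive semigroup whose gaps
eventually become smaller than any given `ε`. -/
lemma exists_semigroup_mem_Icc {a b : ℝ} (ha : 0 < a) (h : Irrational (a / b))
    {ε : ℝ} (hε : 0 < ε) :
    ∃ A : ℝ, ∀ s, A ≤ s → ∃ k l : ℕ, s ≤ k * a + l * b ∧ k * a + l * b ≤ s + ε := by
  obtain ⟨x, hxmem, hx0, hxε⟩ : ∃ x ∈ (AddSubgroup.closure {a, b} : Set ℝ), 0 < x ∧ x < ε := by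
    obtain ⟨x, hx, hx'⟩ := (dense_addSubgroupClosure_pair_iff.2 h).exists_between hε
    exact ⟨x, hx, hx'.1, hx'.2⟩
  obtain ⟨p, q, hpq⟩ := AddSubgroup.mem_closure_pair.1 hxmem
  simp only [zsmul_eq_mul] at hpq
  obtain ⟨K, hK⟩ := exists_nat_ge (a / x)
  rw [div_le_iff₀ hx0] at hK
  set n₀ : ℕ := K * (p.natAbs + q.natAbs) with hn₀
  refine ⟨n₀ * (a + b), fun s hs => ?_⟩
  set N : ℕ := ⌊(s - n₀ * (a + b)) / a⌋₊ with hN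
  have hNle : (N : ℝ) * a ≤ s - n₀ * (a + b) := by
    have := Nat.floor_le (div_nonneg (sub_nonneg.2 hs) ha.le)
    rwa [le_div_iff₀ ha] at this
  have hNlt : s - n₀ * (a + b) < (N + 1) * a := by
    have := Nat.lt_floor_add_one ((s - n₀ * (a + b)) / a)
    rwa [div_lt_iff₀ ha] at this
  set rem : ℝ := s - n₀ * (a + b) - N * a with hrem
  have hrem0 : 0 ≤ rem := by linarith
  have hrema : rem < a := by linarith
  set k : ℕ := ⌈rem / x⌉₊ with hk
  have hk1 : rem ≤ k * x := by
    have := Nat.le_ceil (rem / x)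
    rwa [div_le_iff₀ hx0] at this
  have hk2 : k * x < rem + x := by
    have := Nat.ceil_lt_add_one (div_nonneg hrem0 hx0.le)
    rw [← hk] at this
    have h2 := mul_lt_mul_of_pos_right this hx0
    rwa [add_mul, div_mul_cancel₀ _ hx0.ne', one_mul] at h2
  have hkK : k ≤ K := by
    rw [hk]
    refine Nat.ceil_le.2 ?_
    rw [div_le_iff₀ hx0]; linarith
  -- `n₀` was chosen so large that both integer coefficients are nonnegative
  have hbound : ∀ z : ℤ, z.natAbs ≤ p.natAbs + q.natAbs → (0 : ℤ) ≤ n₀ + k * z := by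
    intro z hz
    have h1 : (k * z.natAbs : ℕ) ≤ n₀ := Nat.mul_le_mul hkK hz
    have h2 : -(z.natAbs : ℤ) ≤ z := by omega
    have h3 : (k : ℤ) * (-(z.natAbs : ℤ)) ≤ k * z := by gcongr
    have h4 : ((k * z.natAbs : ℕ) : ℤ) ≤ n₀ := by exact_mod_cast h1
    push_cast at h4 h3
    linarith
  have hp := hbound p (by omega)
  have hq := hbound q (by omega)
  have hval : ((N + (n₀ + k * p).toNat : ℕ) : ℝ) * a + (((n₀ + k * q).toNat : ℕ) : ℝ) * b
      = n₀ * (a + b) + N * a + k * x := by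
    have e1 : (((n₀ + k * p).toNat : ℕ) : ℝ) = n₀ + k * p := by
      have : (((n₀ + k * p).toNat : ℤ) : ℝ) = ((n₀ + k * p : ℤ) : ℝ) := by
        rw [Int.toNat_of_nonneg hp]
      push_cast at this ⊢
      exact_mod_cast this
    have e2 : (((n₀ + k * q).toNat : ℕ) : ℝ) = n₀ + k * q := by
      have : (((n₀ + k * q).toNat : ℤ) : ℝ) = ((n₀ + k * q : ℤ) : ℝ) := by
        rw [Int.toNat_of_nonneg hq]
      push_cast at this ⊢
      exact_mod_cast this
    rw [Nat.cast_add, e1, e2, ← hpq]; ring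
  refine ⟨N + (n₀ + k * p).toNat, (n₀ + k * q).toNat, ?_, ?_⟩
  · rw [hval]; linarith
  · rw [hval]; linarith

/-! ### Weighted graphs and the renewal equation -/

/-- A finitely branching directed graph on `V` with positive edge lengths, bounded below by
`δ`, such that the numbers `exp (-len e)` over the edges `e` leaving a vertex form a
probability vector. A path of length `s` thus has probability `exp (-s)`. -/
structure WGraph (V : Type) where
  E : V → Type
  fin : ∀ v, Fintype (E v)
  tgt : ∀ {v}, E v → V
  len : ∀ {v}, E v → ℝ
  δ : ℝ
  δ_pos : 0 < δ
  δ_le : ∀ {v} (e : E v), δ ≤ len e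
  sum_exp : ∀ v, ∑ e : E v, Real.exp (-len e) = 1

namespace WGraph

attribute [instance] WGraph.fin

variable {V : Type} (Γ : WGraph V)

lemma len_pos {v : V} (e : Γ.E v) : 0 < Γ.len e := Γ.δ_pos.trans_le (Γ.δ_le e)

/-- There is a (possibly empty) path of total length `s` from `v` to `w`. -/
inductive HasPath : V → V → ℝ → Prop
  | nil (v : V) : HasPath v v 0
  | cons {v w : V} {s : ℝ} (e : Γ.E v) : HasPath (Γ.tgt e) w s → HasPath v w (Γ.len e + s)

variable {Γ} in
lemma HasPath.trans {u v w : V} {s t : ℝ} (h : Γ.HasPath u v s) (h' : Γ.HasPath v w t) :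
    Γ.HasPath u w (s + t) := by
  induction h with
  | nil v => simpa using h'
  | cons e _ ih => rw [add_assoc]; exact .cons e (ih h')

variable {Γ} in
lemma HasPath.loop {v : V} {s : ℝ} (h : Γ.HasPath v v s) (k : ℕ) : Γ.HasPath v v (k * s) := by
  induction k with
  | zero => simpa using HasPath.nil v
  | succ k ih => push_cast; rw [add_mul, one_mul]; exact ih.trans h

/-- If every vertex reaches every other one and there are two closed paths whose lengths have
irrational ratio, then the lengths of the paths between two given vertices are eventually
`ε`-dense. -/
lemma exists_path_mem_Icc (hconn : ∀ v w, ∃ s, Γ.HasPath v w s) {x y : V} {a b : ℝ}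
    (ha : 0 < a) (hab : Irrational (a / b)) (hx : Γ.HasPath x x a)
    (hy : Γ.HasPath y y b) (v w : V) {ε : ℝ} (hε : 0 < ε) :
    ∃ A : ℝ, ∀ s, A ≤ s → ∃ p, Γ.HasPath v w p ∧ s ≤ p ∧ p ≤ s + ε := by
  obtain ⟨A, hA⟩ := exists_semigroup_mem_Icc ha hab hε
  obtain ⟨s₁, h₁⟩ := hconn v x
  obtain ⟨s₂, h₂⟩ := hconn x y
  obtain ⟨s₃, h₃⟩ := hconn y w
  refine ⟨A + (s₁ + s₂ + s₃), fun s hs => ?_⟩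
  obtain ⟨k, l, h4, h5⟩ := hA (s - (s₁ + s₂ + s₃)) (by linarith)
  refine ⟨_, ((h₁.trans (hx.loop k)).trans h₂).trans ((hy.loop l).trans h₃), ?_, ?_⟩ <;> linarith

/-! ### Extremal cluster values of solutions of a renewal equation -/

/-- If a family of functions solves the renewal equation up to a vanishing error, is
asymptotically bounded above by `c`, and one member tends to `c` along a filter going to
infinity, then so do the members averaged by the equation, shifted accordingly. -/
lemma tendsto_of_edge {F err : V → ℝ → ℝ} {c : ℝ} {l : Filter ℝ} (hl : l ≤ atTop)
    (herr : ∀ v, Tendsto (err v) atTop (𝓝 0))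
    (hF : ∀ v t, F v t = err v t + ∑ e : Γ.E v, Real.exp (-Γ.len e) *
      F (Γ.tgt e) (t - Γ.len e))
    (hup : ∀ ε > 0, ∀ᶠ t in atTop, ∀ v, F v t < c + ε)
    {v : V} (e : Γ.E v) {p : ℝ} (h : Tendsto (fun t => F v (t - p)) l (𝓝 c)) :
    Tendsto (fun t => F (Γ.tgt e) (t - (p + Γ.len e))) l (𝓝 c) := by
  have hshift : ∀ r : ℝ, Tendsto (fun t => t - r) l atTop := fun r =>
    (tendsto_atTop_add_const_right _ _ tendsto_id).mono_left hl
  rw [tendsto_order]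
  constructor
  · intro a ha
    set x := Real.exp (-Γ.len e) with hx
    have hxpos : 0 < x := Real.exp_pos _
    have hx1 : x < 1 := by rw [hx, Real.exp_lt_one_iff]; linarith [Γ.len_pos e]
    set ε : ℝ := (c - a) * x with hε
    have hεpos : 0 < ε := mul_pos (by linarith) hxpos
    have hlim : Tendsto (fun t => F v (t - p) - err v (t - p)) l (𝓝 (c - 0)) :=
      h.sub ((herr v).comp (hshift p))
    have hlow : c - 0 - x * ε < c - 0 := by nlinarith
    have hothers : ∀ᶠ t in l, ∀ e' : Γ.E v, F (Γ.tgt e') (t - (p + Γ.len e')) < c + ε := by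
      rw [eventually_all]
      intro e'
      exact ((hshift _).eventually (hup ε hεpos)).mono fun t ht => ht _
    filter_upwards [hothers, hlim.eventually (lt_mem_nhds hlow)] with t ht1 ht2
    classical
    have hrest : ∑ e' ∈ Finset.univ.erase e, Real.exp (-Γ.len e') *
        F (Γ.tgt e') (t - (p + Γ.len e')) ≤
        ∑ e' ∈ Finset.univ.erase e, Real.exp (-Γ.len e') * (c + ε) :=
      Finset.sum_le_sum fun e' _ =>
        mul_le_mul_of_nonneg_left (ht1 e').le (Real.exp_pos _).le
    have hsum : ∑ e' ∈ Finset.univ.erase e, Real.exp (-Γ.len e') = 1 - x := by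
      rw [← Γ.sum_exp v, ← Finset.add_sum_erase _ _ (Finset.mem_univ e)]; ring
    rw [← Finset.sum_mul, hsum] at hrest
    have heq := hF v (t - p)
    simp only [sub_sub] at heq
    rw [← Finset.add_sum_erase _ _ (Finset.mem_univ e), ← hx] at heq
    have h5 : x * a < x * F (Γ.tgt e) (t - (p + Γ.len e)) := by
      have : x * a = x * c - ε := by rw [hε]; ring
      nlinarith
    exact lt_of_mul_lt_mul_left h5 hxpos.le
  · intro b hb
    refine ((hshift (p + Γ.len e)).eventually (hup (b - c) (by linarith))).mono fun t ht => ?_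
    have := ht (Γ.tgt e)
    linarith

lemma tendsto_of_path {F err : V → ℝ → ℝ} {c : ℝ} {l : Filter ℝ} (hl : l ≤ atTop)
    (herr : ∀ v, Tendsto (err v) atTop (𝓝 0))
    (hF : ∀ v t, F v t = err v t + ∑ e : Γ.E v, Real.exp (-Γ.len e) *
      F (Γ.tgt e) (t - Γ.len e))
    (hup : ∀ ε > 0, ∀ᶠ t in atTop, ∀ v, F v t < c + ε)
    {v w : V} {s : ℝ} (hs : Γ.HasPath v w s) {p : ℝ}
    (h : Tendsto (fun t => F v (t - p)) l (𝓝 c)) :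
    Tendsto (fun t => F w (t - (p + s))) l (𝓝 c) := by
  induction hs generalizing p with
  | nil v => simpa using h
  | cons e _ ih =>
    have := ih (Γ.tendsto_of_edge hl herr hF hup e h)
    simpa only [add_assoc] using this

/-- A bounded finite family of functions has a largest cluster value at infinity. -/
lemma exists_max_cluster [Fintype V] [Nonempty V] {F : V → ℝ → ℝ} {B : ℝ}
    (hB : ∀ v t, |F v t| ≤ B) :
    ∃ (v : V) (c : ℝ), (∀ ε > 0, ∀ᶠ t in atTop, ∀ w, F w t < c + ε) ∧
      ∃ l : Filter ℝ, l.NeBot ∧ l ≤ atTop ∧ Tendsto (F v) l (𝓝 c) := by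
  have hbu : ∀ v, IsBoundedUnder (· ≤ ·) atTop (F v) := fun v =>
    isBoundedUnder_of ⟨B, fun t => (abs_le.1 (hB v t)).2⟩
  have hbl : ∀ v, IsBoundedUnder (· ≥ ·) atTop (F v) := fun v =>
    isBoundedUnder_of ⟨-B, fun t => (abs_le.1 (hB v t)).1⟩
  obtain ⟨v, hv⟩ := Finite.exists_max fun v => limsup (F v) atTop
  refine ⟨v, limsup (F v) atTop, fun ε hε => ?_, ?_⟩
  · rw [eventually_all]
    intro w
    exact eventually_lt_of_limsup_lt (by linarith [hv w]) (hbu w)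
  · have hc : MapClusterPt (limsup (F v) atTop) atTop (F v) :=
      MapClusterPt.limsup ((hbl v).isCoboundedUnder_le) (hbu v)
    refine ⟨atTop ⊓ comap (F v) (𝓝 (limsup (F v) atTop)), ?_, inf_le_left, ?_⟩
    · rw [MapClusterPt, ClusterPt, inf_comm] at hc
      rw [← Filter.map_neBot_iff (F v), Filter.push_pull]
      exact hc
    · exact tendsto_comap.mono_left inf_le_right

/-! ### Counting paths -/

variable [DecidableEq V]

/-- `Γ.IsCount j U`: the functions `U v` satisfy the renewal equation for the number of paths
from `v` to `j` of length less than `t`. -/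
structure IsCount (j : V) (U : V → ℝ → ℝ) : Prop where
  mono : ∀ v, Monotone (U v)
  zero : ∀ v t, t ≤ 0 → U v t = 0
  rec_eq : ∀ v t, 0 < t → U v t = (if v = j then 1 else 0) +
    ∑ e : Γ.E v, U (Γ.tgt e) (t - Γ.len e)

/-- Path counting truncated to paths with fewer than `m` edges. -/
noncomputable def countAux (j : V) : ℕ → V → ℝ → ℝ
  | 0, _, _ => 0
  | m + 1, v, t => if 0 < t then (if v = j then 1 else 0) +
      ∑ e : Γ.E v, countAux j m (Γ.tgt e) (t - Γ.len e) else 0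

lemma countAux_nonneg (j : V) (m : ℕ) (v : V) (t : ℝ) : 0 ≤ Γ.countAux j m v t := by
  induction m generalizing v t with
  | zero => simp [countAux]
  | succ m ih =>
    rw [countAux]
    split_ifs
    · exact add_nonneg zero_le_one (Finset.sum_nonneg fun e _ => ih _ _)
    · exact add_nonneg le_rfl (Finset.sum_nonneg fun e _ => ih _ _)
    · exact le_rfl

lemma countAux_mono (j : V) (m : ℕ) (v : V) : Monotone (Γ.countAux j m v) := by
  induction m generalizing v with
  | zero => intro s t _; simp [countAux]
  | succ m ih =>
    intro s t hst
    by_cases hs : 0 < s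
    · rw [countAux, countAux, if_pos hs, if_pos (hs.trans_le hst)]
      gcongr with e
      exact ih _ (by linarith)
    · conv_lhs => rw [countAux, if_neg hs]
      exact Γ.countAux_nonneg j _ v t

lemma countAux_of_nonpos (j : V) (m : ℕ) (v : V) {t : ℝ} (ht : t ≤ 0) :
    Γ.countAux j m v t = 0 := by
  cases m with
  | zero => rfl
  | succ m => rw [countAux, if_neg ht.not_gt]

lemma countAux_succ (j : V) (m : ℕ) (v : V) {t : ℝ} (ht : t ≤ m * Γ.δ) :
    Γ.countAux j (m + 1) v t = Γ.countAux j m v t := by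
  induction m generalizing v t with
  | zero =>
    have : t ≤ 0 := by simpa using ht
    rw [countAux_of_nonpos _ _ _ _ this, countAux_of_nonpos _ _ _ _ this]
  | succ m ih =>
    rw [countAux, countAux]
    congr 2
    refine Finset.sum_congr rfl fun e _ => ih _ ?_
    have := Γ.δ_le e
    push_cast at ht
    linarith

lemma countAux_eq (j : V) {m m' : ℕ} (hm : m ≤ m') (v : V) {t : ℝ} (ht : t ≤ m * Γ.δ) :
    Γ.countAux j m' v t = Γ.countAux j m v t := by
  induction m', hm using Nat.le_induction with
  | base => rfl
  | succ k hk ih =>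
    rw [Γ.countAux_succ j k v (ht.trans ?_), ih]
    have := Γ.δ_pos
    gcongr

/-- The truncated path counts stabilise, and their eventual values solve the renewal equation. -/
lemma exists_isCount (j : V) : ∃ U, Γ.IsCount j U := by
  have hδ := Γ.δ_pos
  have hce : ∀ t : ℝ, t ≤ ⌈t / Γ.δ⌉₊ * Γ.δ := fun t => by
    rw [← div_le_iff₀ hδ]; exact Nat.le_ceil _
  have key : ∀ (v : V) (t : ℝ) (N : ℕ), t ≤ N * Γ.δ →
      Γ.countAux j ⌈t / Γ.δ⌉₊ v t = Γ.countAux j N v t := by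
    intro v t N hN
    have : ⌈t / Γ.δ⌉₊ ≤ N := Nat.ceil_le.2 (by rwa [div_le_iff₀ hδ])
    exact (Γ.countAux_eq j this v (hce t)).symm
  refine ⟨fun v t => Γ.countAux j ⌈t / Γ.δ⌉₊ v t, ⟨?_, ?_, ?_⟩⟩
  · intro v s t hst
    change Γ.countAux j _ v s ≤ Γ.countAux j _ v t
    rw [key v s _ (hst.trans (hce t))]
    exact Γ.countAux_mono j _ v hst
  · intro v t ht
    exact Γ.countAux_of_nonpos j _ v ht
  · intro v t ht
    have h1 : t ≤ ((⌈t / Γ.δ⌉₊ + 1 : ℕ) : ℝ) * Γ.δ := by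
      push_cast; linarith [hce t]
    change Γ.countAux j _ v t = _ + ∑ e : Γ.E v, Γ.countAux j _ (Γ.tgt e) _
    rw [key v t _ h1, countAux, if_pos ht]
    congr 1
    refine Finset.sum_congr rfl fun e _ => (key _ _ _ ?_).symm
    linarith [hce t, Γ.len_pos e]

namespace IsCount

variable {Γ} {j : V} {U : V → ℝ → ℝ}

lemma nonneg (hU : Γ.IsCount j U) (v : V) (t : ℝ) : 0 ≤ U v t := by
  rcases le_total t 0 with h | h
  · rw [hU.zero v t h]
  · rw [← hU.zero v 0 le_rfl]; exact hU.mono v h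

/-- The renewal equation for `exp (-t) * U v t`: up to a vanishing term, its value is an average
of earlier values. -/
lemma rec_exp (hU : Γ.IsCount j U) (v : V) (t : ℝ) : Real.exp (-t) * U v t =
    (if v = j ∧ 0 < t then Real.exp (-t) else 0) +
    ∑ e : Γ.E v, Real.exp (-Γ.len e) *
      (Real.exp (-(t - Γ.len e)) * U (Γ.tgt e) (t - Γ.len e)) := by
  rcases le_or_gt t 0 with ht | ht
  · rw [hU.zero v t ht, if_neg (fun h => ht.not_gt h.2), Finset.sum_eq_zero]
    · simp
    · intro e _
      rw [hU.zero _ _ (by linarith [Γ.len_pos e])]; simp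
  · rw [hU.rec_eq v t ht, mul_add, Finset.mul_sum]
    congr 1
    · simp [ht]
    · refine Finset.sum_congr rfl fun e _ => ?_
      rw [← mul_assoc, ← Real.exp_add]
      congr 2; ring

/-- The bound `U v t ≤ K exp t - 1` propagates through the renewal equation because each vertex
has at least two outgoing edges. -/
lemma exp_mul_le (hU : Γ.IsCount j U) (hE : ∀ v, 2 ≤ Fintype.card (Γ.E v))
    {L : ℝ} (hL : ∀ v (e : Γ.E v), Γ.len e ≤ L) (v : V) (t : ℝ) :
    Real.exp (-t) * U v t ≤ Real.exp L := by
  have key : ∀ (m : ℕ) (v : V) (t : ℝ), -L ≤ t → t ≤ m * Γ.δ →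
      U v t ≤ Real.exp L * Real.exp t - 1 := by
    have base : ∀ (v : V) (t : ℝ), -L ≤ t → t ≤ 0 → U v t ≤ Real.exp L * Real.exp t - 1 := by
      intro v t h1 h2
      rw [hU.zero v t h2, ← Real.exp_add]
      linarith [Real.one_le_exp (x := L + t) (by linarith)]
    intro m
    induction m with
    | zero => intro v t h1 h2; exact base v t h1 (by simpa using h2)
    | succ m ih =>
      intro v t h1 h2
      rcases le_or_gt t 0 with ht | ht
      · exact base v t h1 ht
      rw [hU.rec_eq v t ht]
      have h3 : ∑ e : Γ.E v, U (Γ.tgt e) (t - Γ.len e) ≤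
          ∑ e : Γ.E v, (Real.exp L * Real.exp t * Real.exp (-Γ.len e) - 1) := by
        refine Finset.sum_le_sum fun e _ => ?_
        refine (ih _ _ (by linarith [hL v e]) ?_).trans_eq ?_
        · push_cast at h2; linarith [Γ.δ_le e]
        · rw [sub_eq_add_neg t, Real.exp_add]; ring
      rw [Finset.sum_sub_distrib, ← Finset.mul_sum, Γ.sum_exp] at h3
      have h4 : (2 : ℝ) ≤ Fintype.card (Γ.E v) := by exact_mod_cast hE v
      have h5 : (if v = j then (1 : ℝ) else 0) ≤ 1 := by split_ifs <;> norm_num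
      simp only [Finset.sum_const, Finset.card_univ, nsmul_eq_mul, mul_one] at h3
      linarith
  rcases le_or_gt t 0 with ht | ht
  · rw [hU.zero v t ht, mul_zero]; positivity
  have hLpos : 0 ≤ L := by
    have : 0 < Fintype.card (Γ.E v) := by linarith [hE v]
    obtain ⟨e⟩ := Fintype.card_pos_iff.1 this
    exact (Γ.len_pos e).le.trans (hL v e)
  obtain ⟨m, hm⟩ := exists_nat_ge (t / Γ.δ)
  rw [div_le_iff₀ Γ.δ_pos] at hm
  have := key m v t (by linarith) hm
  calc Real.exp (-t) * U v t ≤ Real.exp (-t) * (Real.exp L * Real.exp t - 1) := by gcongr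
    _ = Real.exp L - Real.exp (-t) := by
      rw [mul_sub, mul_one, mul_left_comm, ← Real.exp_add]; simp
    _ ≤ _ := by linarith [Real.exp_pos (-t)]

/-! ### The renewal theorem -/

/-- One quantity is nearly monotone: multiplying the increasing function `U v` by `exp (-t)`
loses at most the factor `exp (-(t - s))` between `s` and `t`. -/
lemma exp_mul_quasi_mono (hU : Γ.IsCount j U) (v : V) {s t : ℝ} (hst : s ≤ t) :
    Real.exp (-(t - s)) * (Real.exp (-s) * U v s) ≤ Real.exp (-t) * U v t := by
  rw [← mul_assoc, ← Real.exp_add, show -(t - s) + -s = -t by ring]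
  exact mul_le_mul_of_nonneg_left (hU.mono v hst) (Real.exp_pos _).le

lemma intervalIntegrable (hU : Γ.IsCount j U) (v : V) (a b : ℝ) :
    IntervalIntegrable (fun s => Real.exp (-s) * U v s) volume a b :=
  ((hU.mono v).intervalIntegrable (a := a) (b := b)).continuousOn_mul (by fun_prop)

/-- The renewal equation integrated from `0` to `t`. -/
lemma integral_rec (hU : Γ.IsCount j U) (v : V) {t : ℝ} (ht : 0 ≤ t) :
    ∫ s in (0 : ℝ)..t, Real.exp (-s) * U v s = (if v = j then 1 - Real.exp (-t) else 0) +
    ∑ e : Γ.E v, Real.exp (-Γ.len e) *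
      ∫ s in (0 : ℝ)..(t - Γ.len e), Real.exp (-s) * U (Γ.tgt e) s := by
  have hshift : ∀ e : Γ.E v, IntervalIntegrable (fun s => Real.exp (-(s - Γ.len e)) *
      U (Γ.tgt e) (s - Γ.len e)) volume 0 t := fun e => by
    have := (hU.intervalIntegrable (Γ.tgt e) (0 - Γ.len e) (t - Γ.len e)).comp_sub_right (Γ.len e)
    simpa using this
  have h1 : ∫ s in (0 : ℝ)..t, (if v = j ∧ 0 < s then Real.exp (-s) else 0) =
      if v = j then 1 - Real.exp (-t) else 0 := by
    have : ∫ s in (0 : ℝ)..t, (if v = j ∧ 0 < s then Real.exp (-s) else 0) =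
        ∫ s in (0 : ℝ)..t, (if v = j then Real.exp (-s) else 0) := by
      refine intervalIntegral.integral_congr_ae (Eventually.of_forall fun s hs => ?_)
      rw [Set.uIoc_of_le ht] at hs
      simp [hs.1]
    rw [this]
    split_ifs with h
    · rw [intervalIntegral.integral_comp_neg (f := Real.exp)]
      simp
    · simp
  have hi1 : IntervalIntegrable (fun s => if v = j ∧ 0 < s then Real.exp (-s) else 0)
      volume 0 t := by
    have : IntervalIntegrable (fun s => if v = j then Real.exp (-s) else 0) volume 0 t := by
      split_ifs
      · exact (by fun_prop : Continuous fun s : ℝ => Real.exp (-s)).intervalIntegrable _ _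
      · exact intervalIntegrable_const
    refine this.congr fun s hs => ?_
    rw [Set.uIoc_of_le ht] at hs
    simp [hs.1]
  have hi2 : IntervalIntegrable (fun s => ∑ e : Γ.E v, Real.exp (-Γ.len e) *
      (Real.exp (-(s - Γ.len e)) * U (Γ.tgt e) (s - Γ.len e))) volume 0 t := by
    have := IntervalIntegrable.sum Finset.univ fun e _ =>
      (hshift e).const_mul (Real.exp (-Γ.len e))
    have heq : (∑ e : Γ.E v, fun s => Real.exp (-Γ.len e) *
        (Real.exp (-(s - Γ.len e)) * U (Γ.tgt e) (s - Γ.len e))) =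
        fun s => ∑ e : Γ.E v, Real.exp (-Γ.len e) *
          (Real.exp (-(s - Γ.len e)) * U (Γ.tgt e) (s - Γ.len e)) := by
      ext s; simp
    rwa [heq] at this
  rw [intervalIntegral.integral_congr fun s _ => hU.rec_exp v s,
    intervalIntegral.integral_add hi1
      hi2,
    h1, intervalIntegral.integral_finsetSum fun e _ => (hshift e).const_mul _]
  congr 1
  refine Finset.sum_congr rfl fun e _ => ?_
  rw [intervalIntegral.integral_const_mul,
    intervalIntegral.integral_comp_sub_right (fun s => Real.exp (-s) * U (Γ.tgt e) s)]
  congr 1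
  rw [← intervalIntegral.integral_add_adjacent_intervals
    (hU.intervalIntegrable (Γ.tgt e) (0 - Γ.len e) 0) (hU.intervalIntegrable _ 0 _)]
  have : ∫ s in (0 - Γ.len e)..0, Real.exp (-s) * U (Γ.tgt e) s = 0 := by
    rw [intervalIntegral.integral_congr (g := fun _ => (0 : ℝ))]
    · simp
    · intro s hs
      rw [Set.uIcc_of_le (by linarith [Γ.len_pos e])] at hs
      simp [hU.zero _ s hs.2]
  rw [this, zero_add]

/-- The conserved quantity of the renewal equation, obtained by weighting the integrated equation
with a stationary vector `q`. -/
lemma conserved [Fintype V] (hU : Γ.IsCount j U) {q : V → ℝ}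
    (hq : ∀ f : V → ℝ, ∑ v, ∑ e : Γ.E v, q v * Real.exp (-Γ.len e) * f (Γ.tgt e) =
      ∑ v, q v * f v) {t : ℝ} (ht : 0 ≤ t) :
    ∑ v, ∑ e : Γ.E v, q v * Real.exp (-Γ.len e) *
      ∫ s in (t - Γ.len e)..t, Real.exp (-s) * U (Γ.tgt e) s = q j * (1 - Real.exp (-t)) := by
  set W : V → ℝ → ℝ := fun v t => ∫ s in (0 : ℝ)..t, Real.exp (-s) * U v s with hW
  have h1 : ∀ v (e : Γ.E v), ∫ s in (t - Γ.len e)..t, Real.exp (-s) * U (Γ.tgt e) s =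
      W (Γ.tgt e) t - W (Γ.tgt e) (t - Γ.len e) := fun v e =>
    (intervalIntegral.integral_interval_sub_left (hU.intervalIntegrable _ _ _)
      (hU.intervalIntegrable _ _ _)).symm
  have h2 : ∀ v, W v t = (if v = j then 1 - Real.exp (-t) else 0) +
      ∑ e : Γ.E v, Real.exp (-Γ.len e) * W (Γ.tgt e) (t - Γ.len e) :=
    fun v => hU.integral_rec v ht
  have h3 : ∑ v, q v * W v t = q j * (1 - Real.exp (-t)) +
      ∑ v, ∑ e : Γ.E v, q v * Real.exp (-Γ.len e) * W (Γ.tgt e) (t - Γ.len e) := by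
    calc ∑ v, q v * W v t = ∑ v, (q v * (if v = j then 1 - Real.exp (-t) else 0) +
        ∑ e : Γ.E v, q v * Real.exp (-Γ.len e) * W (Γ.tgt e) (t - Γ.len e)) := by
          refine Finset.sum_congr rfl fun v _ => ?_
          rw [h2 v, mul_add, Finset.mul_sum]
          simp only [mul_assoc]
      _ = _ := by
          rw [Finset.sum_add_distrib]
          simp
  simp only [h1, mul_sub, Finset.sum_sub_distrib]
  rw [hq (fun v => W v t), h3]
  ring

/-- Pointwise convergence along the dense set of path lengths improves, by quasi-monotonicity, to
uniform convergence on windows far enough from `t`. -/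
lemma eventually_window [Finite V] (hU : Γ.IsCount j U) {l : Filter ℝ} {c : ℝ} {v : V}
    (hconv : ∀ w p, Γ.HasPath v w p →
      Tendsto (fun t => Real.exp (-(t - p)) * U w (t - p)) l (𝓝 c))
    (hdense : ∀ w, ∀ ε > 0, ∃ A : ℝ, ∀ s, A ≤ s → ∃ p, Γ.HasPath v w p ∧ s ≤ p ∧ p ≤ s + ε)
    (L : ℝ) {ε : ℝ} (hε : 0 < ε) :
    ∃ A : ℝ, ∀ᶠ t in l, ∀ w, ∀ s ∈ Set.Icc A (A + L),
      |Real.exp (-(t - s)) * U w (t - s) - c| ≤ ε := by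
  obtain ⟨η, hη, h1, h2⟩ : ∃ η > 0, c - ε < Real.exp (-(3 * η)) * c ∧
      Real.exp (3 * η) * c < c + ε := by
    have t1 : Tendsto (fun η : ℝ => Real.exp (-(3 * η)) * c) (𝓝[>] 0) (𝓝 c) := by
      have : Continuous fun η : ℝ => Real.exp (-(3 * η)) * c := by fun_prop
      simpa using (this.tendsto 0).mono_left nhdsWithin_le_nhds
    have t2 : Tendsto (fun η : ℝ => Real.exp (3 * η) * c) (𝓝[>] 0) (𝓝 c) := by
      have : Continuous fun η : ℝ => Real.exp (3 * η) * c := by fun_prop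
      simpa using (this.tendsto 0).mono_left nhdsWithin_le_nhds
    obtain ⟨η, h⟩ := ((t1.eventually (lt_mem_nhds (by linarith : c - ε < c))).and
      ((t2.eventually (gt_mem_nhds (by linarith : c < c + ε))).and
        self_mem_nhdsWithin)).exists
    exact ⟨η, h.2.2, h.1, h.2.1⟩
  choose A₀ hA₀ using fun w => hdense w η hη
  obtain ⟨A₁, hA₁⟩ := (Set.finite_range A₀).bddAbove
  refine ⟨A₁ + 2 * η, ?_⟩
  rw [eventually_all]
  intro w
  have hAw : A₀ w ≤ A₁ := hA₁ ⟨w, rfl⟩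
  refine isCompact_Icc.induction_on (p := fun S : Set ℝ => ∀ᶠ t in l, ∀ s ∈ S,
    |Real.exp (-(t - s)) * U w (t - s) - c| ≤ ε) ?_ ?_ ?_ ?_
  · simp
  · intro S T hST hT
    exact hT.mono fun t ht s hs => ht s (hST hs)
  · intro S T hS hT
    filter_upwards [hS, hT] with t h1 h2 s hs
    exact hs.elim (h1 s) (h2 s)
  · intro s hs
    refine ⟨Set.Ioo (s - η) (s + η), mem_nhdsWithin_of_mem_nhds
      (Ioo_mem_nhds (by linarith) (by linarith)), ?_⟩
    obtain ⟨p₁, hp₁, h3, h4⟩ := hA₀ w (s + η) (by linarith [hs.1])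
    obtain ⟨p₂, hp₂, h5, h6⟩ := hA₀ w (s - 2 * η) (by linarith [hs.1])
    filter_upwards [((hconv w p₁ hp₁).const_mul (Real.exp (-(3 * η)))).eventually
        (lt_mem_nhds h1),
      ((hconv w p₂ hp₂).const_mul (Real.exp (3 * η))).eventually (gt_mem_nhds h2)] with t h7 h8
    intro s' hs'
    have hnn : ∀ r, 0 ≤ Real.exp (-r) * U w r :=
      fun r => mul_nonneg (Real.exp_pos _).le (hU.nonneg w r)
    rw [abs_le]
    constructor
    · have h9 := hU.exp_mul_quasi_mono w (s := t - p₁) (t := t - s') (by linarith [hs'.2])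
      have h10 : Real.exp (-(3 * η)) ≤ Real.exp (-(t - s' - (t - p₁))) :=
        Real.exp_le_exp.2 (by linarith [hs'.1])
      have := mul_le_mul_of_nonneg_right h10 (hnn (t - p₁))
      linarith
    · have h9 := hU.exp_mul_quasi_mono w (s := t - s') (t := t - p₂) (by linarith [hs'.1])
      have h10 : Real.exp (-(3 * η)) ≤ Real.exp (-(t - p₂ - (t - s'))) :=
        Real.exp_le_exp.2 (by linarith [hs'.2])
      have h11 := (mul_le_mul_of_nonneg_right h10 (hnn (t - s'))).trans h9
      have h12 := mul_le_mul_of_nonneg_left h11 (Real.exp_pos (3 * η)).le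
      rw [← mul_assoc, ← Real.exp_add] at h12
      simp only [add_neg_cancel, Real.exp_zero, one_mul] at h12
      linarith

/-- The conserved quantity forces the value of every limit that is uniform on long windows. -/
lemma limit_eq [Fintype V] (hU : Γ.IsCount j U) {q : V → ℝ} (hq0 : ∀ v, 0 ≤ q v)
    (hq : ∀ f : V → ℝ, ∑ v, ∑ e : Γ.E v, q v * Real.exp (-Γ.len e) * f (Γ.tgt e) =
      ∑ v, q v * f v)
    {l : Filter ℝ} [l.NeBot] (hl : l ≤ atTop) {c : ℝ} {v : V}
    (hconv : ∀ w p, Γ.HasPath v w p →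
      Tendsto (fun t => Real.exp (-(t - p)) * U w (t - p)) l (𝓝 c))
    (hdense : ∀ w, ∀ ε > 0, ∃ A : ℝ, ∀ s, A ≤ s → ∃ p, Γ.HasPath v w p ∧ s ≤ p ∧ p ≤ s + ε)
    {L : ℝ} (hL : ∀ v (e : Γ.E v), Γ.len e ≤ L) :
    c * ∑ v, ∑ e : Γ.E v, q v * Real.exp (-Γ.len e) * Γ.len e = q j := by
  set C := ∑ v, ∑ e : Γ.E v, q v * Real.exp (-Γ.len e) * Γ.len e with hC
  have key : ∀ ε > 0, |q j - c * C| ≤ ε * C := by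
    intro ε hε
    obtain ⟨A, hA⟩ := hU.eventually_window hconv hdense L hε
    have hshift : Tendsto (fun t => t - A) l atTop :=
      (tendsto_atTop_add_const_right _ _ tendsto_id).mono_left hl
    have hlim : Tendsto (fun t => |q j * (1 - Real.exp (-(t - A))) - c * C|) l
        (𝓝 |q j * (1 - 0) - c * C|) := by
      have : Tendsto (fun t => Real.exp (-(t - A))) l (𝓝 0) :=
        Real.tendsto_exp_neg_atTop_nhds_zero.comp hshift
      exact (((this.const_sub 1).const_mul _).sub_const _).abs
    rw [sub_zero, mul_one] at hlim
    refine le_of_tendsto hlim ?_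
    filter_upwards [hA, hshift.eventually (eventually_ge_atTop 0)] with t ht1 ht2
    rw [← hU.conserved hq ht2, hC, Finset.mul_sum, Finset.mul_sum, ← Finset.sum_sub_distrib]
    refine (Finset.abs_sum_le_sum_abs _ _).trans (Finset.sum_le_sum fun v _ => ?_)
    rw [Finset.mul_sum, Finset.mul_sum, ← Finset.sum_sub_distrib]
    refine (Finset.abs_sum_le_sum_abs _ _).trans (Finset.sum_le_sum fun e _ => ?_)
    have h1 : |(∫ s in (t - A - Γ.len e)..(t - A), Real.exp (-s) * U (Γ.tgt e) s) -
        c * Γ.len e| ≤ ε * Γ.len e := by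
      have h2 : c * Γ.len e = ∫ s in (t - A - Γ.len e)..(t - A), c := by
        rw [intervalIntegral.integral_const, smul_eq_mul]; ring
      rw [h2, ← intervalIntegral.integral_sub (hU.intervalIntegrable _ _ _)
        intervalIntegrable_const, ← Real.norm_eq_abs]
      refine (intervalIntegral.norm_integral_le_of_norm_le_const (C := ε) fun s hs => ?_).trans_eq
        ?_
      · rw [Set.uIoc_of_le (by linarith [Γ.len_pos e])] at hs
        have := ht1 (Γ.tgt e) (t - s) ⟨by linarith [hs.2], by linarith [hs.1, hL v e]⟩
        simpa using this
      · rw [sub_sub_cancel, abs_of_pos (Γ.len_pos e)]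
    have h3 : 0 ≤ q v * Real.exp (-Γ.len e) := mul_nonneg (hq0 v) (Real.exp_pos _).le
    calc _ = |q v * Real.exp (-Γ.len e) *
          ((∫ s in (t - A - Γ.len e)..(t - A), Real.exp (-s) * U (Γ.tgt e) s) -
            c * Γ.len e)| := by congr 1; ring
      _ = q v * Real.exp (-Γ.len e) *
          |(∫ s in (t - A - Γ.len e)..(t - A), Real.exp (-s) * U (Γ.tgt e) s) -
            c * Γ.len e| := by rw [abs_mul, abs_of_nonneg h3]
      _ ≤ q v * Real.exp (-Γ.len e) * (ε * Γ.len e) := by gcongr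
      _ = _ := by ring
  have hlim : Tendsto (fun ε : ℝ => ε * C) (𝓝[>] 0) (𝓝 0) := by
    have : Continuous fun ε : ℝ => ε * C := by fun_prop
    simpa using (this.tendsto 0).mono_left nhdsWithin_le_nhds
  have := ge_of_tendsto hlim (eventually_nhdsWithin_of_forall fun ε hε => key ε hε)
  have := abs_nonpos_iff.1 this
  linarith

/-- **Renewal theorem.** With a positive stationary vector `q` and eventually dense path lengths,
the number of paths from `v` to `j` of length less than `t` is asymptotic to
`exp t * q j / (∑ q v exp (-len e) len e)`, whatever the starting vertex `v`. -/
theorem tendsto_exp_mul [Fintype V] (hU : Γ.IsCount j U) {q : V → ℝ} (hq0 : ∀ v, 0 < q v)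
    (hq : ∀ f : V → ℝ, ∑ v, ∑ e : Γ.E v, q v * Real.exp (-Γ.len e) * f (Γ.tgt e) =
      ∑ v, q v * f v)
    (hdense : ∀ v w, ∀ ε > 0, ∃ A : ℝ, ∀ s, A ≤ s → ∃ p, Γ.HasPath v w p ∧ s ≤ p ∧ p ≤ s + ε)
    (hE : ∀ v, 2 ≤ Fintype.card (Γ.E v)) {L : ℝ} (hL : ∀ v (e : Γ.E v), Γ.len e ≤ L) (v : V) :
    Tendsto (fun t => Real.exp (-t) * U v t) atTop
      (𝓝 (q j / ∑ v, ∑ e : Γ.E v, q v * Real.exp (-Γ.len e) * Γ.len e)) := by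
  have : Nonempty V := ⟨v⟩
  set C := ∑ v, ∑ e : Γ.E v, q v * Real.exp (-Γ.len e) * Γ.len e with hC
  have hCpos : 0 < C := by
    refine Finset.sum_pos (fun v _ => Finset.sum_pos (fun e _ => ?_) ?_) ⟨v, Finset.mem_univ v⟩
    · exact mul_pos (mul_pos (hq0 v) (Real.exp_pos _)) (Γ.len_pos e)
    · rw [← Finset.card_pos, Finset.card_univ]; linarith [hE v]
  set G : V → ℝ → ℝ := fun v t => Real.exp (-t) * U v t with hG
  have hGnn : ∀ v t, 0 ≤ G v t := fun v t => mul_nonneg (Real.exp_pos _).le (hU.nonneg v t)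
  have hGb : ∀ v t, |G v t| ≤ Real.exp L := fun v t => by
    rw [abs_of_nonneg (hGnn v t)]; exact hU.exp_mul_le hE hL v t
  set err : V → ℝ → ℝ := fun v t => if v = j ∧ 0 < t then Real.exp (-t) else 0 with herr
  have herr0 : ∀ v, Tendsto (err v) atTop (𝓝 0) := by
    intro v
    refine squeeze_zero (g := fun t => Real.exp (-t)) (fun t => ?_) (fun t => ?_)
      Real.tendsto_exp_neg_atTop_nhds_zero
    · simp only [herr]; split_ifs <;> positivity
    · simp only [herr]; split_ifs
      · exact le_rfl
      · positivity
  have hrec : ∀ v t, G v t = err v t + ∑ e : Γ.E v, Real.exp (-Γ.len e) *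
      G (Γ.tgt e) (t - Γ.len e) := fun v t => hU.rec_exp v t
  -- the largest cluster value
  obtain ⟨v₁, c₁, hup₁, l₁, hne₁, hl₁, hlim₁⟩ := exists_max_cluster hGb
  have hc₁ : c₁ * C = q j := by
    refine hU.limit_eq (fun v => (hq0 v).le) hq hl₁ (v := v₁) (fun w p hp => ?_)
      (hdense v₁) hL
    have := Γ.tendsto_of_path hl₁ herr0 hrec hup₁ hp (p := 0) (by simpa using hlim₁)
    simpa only [zero_add] using this
  -- the smallest cluster value, as the largest one of `-G`
  obtain ⟨v₂, c₂, hup₂, l₂, hne₂, hl₂, hlim₂⟩ :=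
    exists_max_cluster (F := fun v t => -G v t) (B := Real.exp L)
      (fun v t => by rw [abs_neg]; exact hGb v t)
  have hc₂ : -c₂ * C = q j := by
    refine hU.limit_eq (fun v => (hq0 v).le) hq hl₂ (v := v₂) (fun w p hp => ?_)
      (hdense v₂) hL
    have := Γ.tendsto_of_path (F := fun v t => -G v t) (err := fun v t => -err v t) hl₂
      (fun v => by simpa using (herr0 v).neg)
      (fun v t => by rw [hrec v t, neg_add, ← Finset.sum_neg_distrib]; simp only [mul_neg])
      hup₂ hp (p := 0) (by simpa using hlim₂)
    simpa only [zero_add, neg_neg] using this.neg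
  have e₁ : c₁ = q j / C := by rw [← hc₁]; field_simp
  have e₂ : -c₂ = q j / C := by rw [← hc₂]; field_simp
  rw [tendsto_order]
  constructor
  · intro a ha
    filter_upwards [hup₂ (q j / C - a) (by linarith)] with t ht
    have := ht v
    simp only [hG] at this
    linarith
  · intro b hb
    filter_upwards [hup₁ (b - q j / C) (by linarith)] with t ht
    have := ht v
    simp only [hG] at this
    linarith

end IsCount

end WGraph

/-! ### The adjugate of `1 - M` for an irreducible stochastic matrix `M` -/

section Stochastic

variable {V : Type} [Fintype V] {M : Matrix V V ℝ}

/-- Maximum principle: a function vanishing at `j` that elsewhere is `s ≤ 1` times its own average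
is zero, since its maximal modulus would propagate along the edges of `M` to `j`. -/
lemma eq_zero_of_substochastic (hnn : ∀ i j, 0 ≤ M i j) (hrow : ∀ i, ∑ j, M i j = 1)
    (hirr : ∀ i j, Relation.TransGen (fun a b => 0 < M a b) i j) {s : ℝ} (hs0 : 0 ≤ s)
    (hs1 : s ≤ 1) {j : V} {v : V → ℝ} (hj : v j = 0)
    (hv : ∀ i, i ≠ j → v i = s * ∑ h, M i h * v h) : v = 0 := by
  have : Nonempty V := ⟨j⟩
  obtain ⟨m, hm⟩ := Finite.exists_max fun i => |v i|
  have hstep : ∀ a b, |v a| = |v m| → 0 < M a b → |v b| = |v m| := by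
    intro a b ha hab
    rcases eq_or_ne a j with rfl | haj
    · rw [hj, abs_zero] at ha
      exact le_antisymm (hm b) (by rw [← ha]; exact abs_nonneg _)
    have h1 : |v a| ≤ ∑ h, M a h * |v h| := by
      rw [hv a haj, abs_mul, abs_of_nonneg hs0]
      calc s * |∑ h, M a h * v h| ≤ 1 * |∑ h, M a h * v h| := by gcongr
        _ ≤ ∑ h, |M a h * v h| := by rw [one_mul]; exact Finset.abs_sum_le_sum_abs _ _
        _ = _ := Finset.sum_congr rfl fun h _ => by rw [abs_mul, abs_of_nonneg (hnn a h)]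
    have h2 : ∑ h, M a h * (|v m| - |v h|) ≤ 0 := by
      simp only [mul_sub, Finset.sum_sub_distrib]
      rw [← Finset.sum_mul, hrow, one_mul]
      linarith
    have h3 : ∀ h ∈ Finset.univ, 0 ≤ M a h * (|v m| - |v h|) := fun h _ =>
      mul_nonneg (hnn a h) (sub_nonneg.2 (hm h))
    have h4 := (Finset.sum_eq_zero_iff_of_nonneg h3).1
      (le_antisymm h2 (Finset.sum_nonneg h3)) b (Finset.mem_univ b)
    rcases mul_eq_zero.1 h4 with h5 | h5
    · exact absurd h5 hab.ne'
    · linarith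
  have hprop : ∀ b, Relation.TransGen (fun a b => 0 < M a b) m b → |v b| = |v m| := by
    intro b hb
    induction hb with
    | single h => exact hstep _ _ rfl h
    | tail _ h ih => exact hstep _ _ ih h
  have h0 : |v m| = 0 := by rw [← hprop j (hirr m j), hj, abs_zero]
  ext i
  exact abs_eq_zero.1 (le_antisymm ((hm i).trans_eq h0) (abs_nonneg _))

variable [DecidableEq V]

/-- The diagonal cofactors of `1 - s M` do not vanish for `s ∈ [0, 1]`, and equal `1` at `s = 0`. -/
lemma adjugate_diag_pos (hnn : ∀ i j, 0 ≤ M i j) (hrow : ∀ i, ∑ j, M i j = 1)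
    (hirr : ∀ i j, Relation.TransGen (fun a b => 0 < M a b) i j) (j : V) :
    0 < (1 - M).adjugate j j := by
  set B : ℝ → Matrix V V ℝ := fun s => (1 - s • M).updateRow j (Pi.single j 1) with hB
  have hne : ∀ s ∈ Set.Icc (0 : ℝ) 1, (B s).det ≠ 0 := by
    intro s hs h0
    obtain ⟨v, hv0, hv⟩ := Matrix.exists_mulVec_eq_zero_iff.2 h0
    refine hv0 (eq_zero_of_substochastic hnn hrow hirr hs.1 hs.2 (j := j) ?_ ?_)
    · have := congrFun hv j
      simpa [hB, Matrix.mulVec] using this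
    · intro i hi
      have := congrFun hv i
      simp only [hB, Matrix.mulVec, Matrix.updateRow_ne hi, Pi.zero_apply] at this
      change (1 - s • M).mulVec v i = 0 at this
      rw [Matrix.sub_mulVec, Matrix.one_mulVec, Matrix.smul_mulVec] at this
      simp only [Pi.sub_apply, Pi.smul_apply, smul_eq_mul, Matrix.mulVec, dotProduct] at this
      linarith
  have hcont : Continuous fun s => (B s).det := by
    have hA : Continuous fun s : ℝ => (1 - s • M : Matrix V V ℝ) := by fun_prop
    exact (hA.matrix_updateRow j continuous_const).matrix_det
  have h0 : (B 0).det = 1 := by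
    have : B 0 = 1 := by
      ext a b
      by_cases h : a = j
      · subst h
        simp [hB, Matrix.one_apply, Pi.single_apply, eq_comm]
      · simp [hB, Matrix.updateRow_ne h]
    rw [this, Matrix.det_one]
  have h1 : (1 - M).adjugate j j = (B 1).det := by
    rw [Matrix.adjugate_apply]; simp [hB]
  rw [h1]
  by_contra hneg
  obtain ⟨s, hs, hs0⟩ := intermediate_value_Icc' zero_le_one hcont.continuousOn
    (show (0 : ℝ) ∈ Set.Icc ((B 1).det) ((B 0).det) from ⟨not_lt.1 hneg, by rw [h0]; norm_num⟩)
  exact hne s hs hs0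

lemma det_one_sub_eq_zero [Nonempty V] (hrow : ∀ i, ∑ j, M i j = 1) : (1 - M).det = 0 := by
  refine Matrix.exists_mulVec_eq_zero_iff.1 ⟨fun _ => 1, ?_, ?_⟩
  · intro h
    exact one_ne_zero (congrFun h (Classical.arbitrary V))
  · ext i
    rw [Matrix.sub_mulVec, Matrix.one_mulVec]
    simp [Matrix.mulVec, dotProduct, hrow]

lemma adjugate_rows_eq (hnn : ∀ i j, 0 ≤ M i j) (hrow : ∀ i, ∑ j, M i j = 1)
    (hirr : ∀ i j, Relation.TransGen (fun a b => 0 < M a b) i j) (a b c : V) :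
    (1 - M).adjugate a c = (1 - M).adjugate b c := by
  have : Nonempty V := ⟨a⟩
  have h1 : (1 - M) * (1 - M).adjugate = 0 := by
    rw [Matrix.mul_adjugate, det_one_sub_eq_zero hrow, zero_smul]
  set x : V → ℝ := fun i => (1 - M).adjugate i c with hx
  have h2 : ∀ i, x i = ∑ h, M i h * x h := by
    intro i
    have := congrFun (congrFun h1 i) c
    rw [sub_mul, one_mul] at this
    simp only [Matrix.sub_apply, Matrix.mul_apply, Matrix.zero_apply] at this
    exact sub_eq_zero.1 this
  have h3 := eq_zero_of_substochastic hnn hrow hirr zero_le_one le_rfl (j := b)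
    (v := fun i => x i - x b) (sub_self _) (fun i _ => by
      simp only [mul_sub, Finset.sum_sub_distrib]
      rw [← Finset.sum_mul, hrow, ← h2 i]; ring)
  exact sub_eq_zero.1 (congrFun h3 a)

lemma adjugate_stationary (hrow : ∀ i, ∑ j, M i j = 1) (a c : V) :
    ∑ h, (1 - M).adjugate a h * M h c = (1 - M).adjugate a c := by
  have : Nonempty V := ⟨a⟩
  have h1 : (1 - M).adjugate * (1 - M) = 0 := by
    rw [Matrix.adjugate_mul, det_one_sub_eq_zero hrow, zero_smul]
  have := congrFun (congrFun h1 a) c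
  rw [mul_sub, mul_one] at this
  simp only [Matrix.sub_apply, Matrix.mul_apply, Matrix.zero_apply] at this
  linarith

end Stochastic

noncomputable section

/-! ### Volumes and interiors of tiles -/

section Geometry

variable {d n : ℕ}

lemma volume_similar {a : ℝ} (ha : 0 < a) (φ : Euc d ≃ᵢ Euc d) (X : Set (Euc d)) :
    volume (φ '' (a • X)) = ENNReal.ofReal (a ^ d) * volume X := by
  rw [← EuclideanSpace.euclideanHausdorffMeasure_eq_volume d,
    φ.isometry.euclideanHausdorffMeasure_image,
    EuclideanSpace.euclideanHausdorffMeasure_eq_volume d, Measure.addHaar_smul,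
    finrank_euclideanSpace_fin, abs_of_pos (pow_pos ha d)]

lemma interior_similar {a : ℝ} (ha : 0 < a) (φ : Euc d ≃ᵢ Euc d) (X : Set (Euc d)) :
    interior (φ '' (a • X)) = φ '' (a • interior X) := by
  rw [← interior_smul₀ ha.ne']
  exact (φ.toHomeomorph.image_interior _).symm

lemma frontier_similar {a : ℝ} (ha : 0 < a) (φ : Euc d ≃ᵢ Euc d) (X : Set (Euc d)) :
    frontier (φ '' (a • X)) = φ '' (a • frontier X) := by
  have h1 : frontier (a • X) = a • frontier X :=
    ((Homeomorph.smulOfNeZero a ha.ne').image_frontier X).symm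
  rw [← h1]
  exact (φ.toHomeomorph.image_frontier _).symm

namespace MSScheme

variable (σ : MSScheme d n)

lemma volume_ne_top (i : Fin n) : volume (σ.T i) ≠ ⊤ := (σ.tile i).1.measure_lt_top.ne

lemma vol_pos (i : Fin n) : 0 < (volume (σ.T i)).toReal :=
  ENNReal.toReal_pos (σ.tile i).2.2.1.ne' (σ.volume_ne_top i)

lemma interior_nonempty (i : Fin n) : (interior (σ.T i)).Nonempty := by
  by_contra h
  rw [Set.not_nonempty_iff_eq_empty] at h
  have h1 : σ.T i ⊆ frontier (σ.T i) := by
    rw [frontier, h, Set.sdiff_empty]; exact subset_closure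
  exact (σ.tile i).2.2.1.ne' (measure_mono_null h1 (σ.tile i).2.2.2)

lemma beta_pow_mul (hd : d ≠ 0) (i j : Fin n) (k : Fin (σ.numSub i j)) :
    σ.beta i j k ^ d * (volume (σ.T i)).toReal = σ.scale i j k ^ d * (volume (σ.T j)).toReal := by
  have hi := σ.vol_pos i
  have hj := σ.vol_pos j
  rw [beta, mul_pow, one_div, Real.rpow_inv_natCast_pow (by positivity) hd]
  field_simp

lemma beta_pow_pos (i j : Fin n) (k : Fin (σ.numSub i j)) : 0 < σ.beta i j k ^ d :=
  pow_pos (σ.beta_pos i j k) d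

lemma beta_pow_lt_one (hd : d ≠ 0) (i j : Fin n) (k : Fin (σ.numSub i j)) :
    σ.beta i j k ^ d < 1 :=
  pow_lt_one₀ (σ.beta_pos i j k).le (σ.beta_lt_one i j k) hd

variable {σ}

lemma volume_rule (hd : d ≠ 0) {ϱ : (i j : Fin n) → Fin (σ.numSub i j) → Set (Euc d)}
    (hϱ : ϱ ∈ σ.rules) (i j : Fin n) (k : Fin (σ.numSub i j)) :
    volume (ϱ i j k) = ENNReal.ofReal (σ.beta i j k ^ d) * volume (σ.T i) := by
  obtain ⟨φ, hφ⟩ := σ.rules_iso ϱ hϱ i j k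
  rw [hφ, volume_similar (σ.scale_pos i j k), ← ENNReal.ofReal_toReal (σ.volume_ne_top j),
    ← ENNReal.ofReal_toReal (σ.volume_ne_top i), ← ENNReal.ofReal_mul (σ.beta_pow_pos i j k).le,
    ← ENNReal.ofReal_mul (pow_pos (σ.scale_pos i j k) d).le, σ.beta_pow_mul hd]

lemma interior_rule_nonempty {ϱ : (i j : Fin n) → Fin (σ.numSub i j) → Set (Euc d)}
    (hϱ : ϱ ∈ σ.rules) (i j : Fin n) (k : Fin (σ.numSub i j)) :
    (interior (ϱ i j k)).Nonempty := by
  obtain ⟨φ, hφ⟩ := σ.rules_iso ϱ hϱ i j k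
  rw [hφ, interior_similar (σ.scale_pos i j k)]
  exact ((σ.interior_nonempty j).smul_set).image _

lemma frontier_rule {ϱ : (i j : Fin n) → Fin (σ.numSub i j) → Set (Euc d)}
    (hϱ : ϱ ∈ σ.rules) (i j : Fin n) (k : Fin (σ.numSub i j)) :
    volume (frontier (ϱ i j k)) = 0 := by
  obtain ⟨φ, hφ⟩ := σ.rules_iso ϱ hϱ i j k
  rw [hφ, frontier_similar (σ.scale_pos i j k), volume_similar (σ.scale_pos i j k),
    (σ.tile j).2.2.2, mul_zero]

/-- Volume is conserved under substitution; the pieces overlap only in their null boundaries. -/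
lemma sum_beta_pow (σ : MSScheme d n) (hd : d ≠ 0) (i : Fin n) :
    ∑ p : (Σ j : Fin n, Fin (σ.numSub i j)), σ.beta i p.1 p.2 ^ d = 1 := by
  obtain ⟨ϱ, hϱ⟩ := σ.rules_nonempty
  have hnull : ∀ p : (Σ j : Fin n, Fin (σ.numSub i j)),
      NullMeasurableSet (ϱ i p.1 p.2) volume := fun p =>
    nullMeasurableSet_of_null_frontier (frontier_rule hϱ i p.1 p.2)
  have hae : ∀ p : (Σ j : Fin n, Fin (σ.numSub i j)),
      ϱ i p.1 p.2 =ᵐ[volume] interior (ϱ i p.1 p.2) := fun p =>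
    (interior_ae_eq_of_null_frontier (frontier_rule hϱ i p.1 p.2)).symm
  have hdis : Pairwise (Function.onFun (AEDisjoint volume)
      fun p : (Σ j : Fin n, Fin (σ.numSub i j)) => ϱ i p.1 p.2) := by
    intro p q hpq
    exact ((σ.rules_disjoint ϱ hϱ i p q hpq).aedisjoint).congr (hae p) (hae q)
  have h1 := measure_iUnion₀ hdis hnull
  rw [σ.rules_cover ϱ hϱ i, tsum_fintype] at h1
  simp only [volume_rule hd hϱ] at h1
  have h2 := congrArg ENNReal.toReal h1
  rw [ENNReal.toReal_sum fun p _ =>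
    ENNReal.mul_ne_top ENNReal.ofReal_ne_top (σ.volume_ne_top i)] at h2
  simp only [ENNReal.toReal_mul, ENNReal.toReal_ofReal (σ.beta_pow_pos i _ _).le] at h2
  rw [← Finset.sum_mul] at h2
  have hi := σ.vol_pos i
  exact mul_right_cancel₀ hi.ne' (by rw [one_mul]; exact h2.symm)

end MSScheme

/-- The real-valued volume of a labeled tile. -/
def LTile.vol (S : LTile d n) : ℝ := (volume S.carrier).toReal

/-- A nonempty finite collection of tiles of finite positive volume with nonempty, pairwise disjoint
interiors. -/
structure IsPacking (P : Finset (LTile d n)) : Prop where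
  nonempty : P.Nonempty
  interior_nonempty : ∀ S ∈ P, (interior S.carrier).Nonempty
  volume_pos : ∀ S ∈ P, 0 < volume S.carrier
  volume_ne_top : ∀ S ∈ P, volume S.carrier ≠ ⊤
  disjoint : ∀ S ∈ P, ∀ S' ∈ P, S ≠ S' → Disjoint (interior S.carrier) (interior S'.carrier)

lemma IsPacking.vol_pos {P : Finset (LTile d n)} (hP : IsPacking P) {S : LTile d n} (hS : S ∈ P) :
    0 < S.vol := ENNReal.toReal_pos (hP.volume_pos S hS).ne' (hP.volume_ne_top S hS)

/-- The pieces of a substituted tile are indexed injectively by the edges of the scheme. -/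
lemma SubstitutesTo.exists_param {σ : MSScheme d n} (hd : d ≠ 0) {S : LTile d n}
    {P : Finset (LTile d n)} (h : SubstitutesTo σ S P) :
    ∃ c : (Σ j : Fin n, Fin (σ.numSub S.type j)) → LTile d n, P = Finset.image c Finset.univ ∧
      (∀ p, (c p).type = p.1) ∧
      (∀ p, volume (c p).carrier
        = ENNReal.ofReal (σ.beta S.type p.1 p.2 ^ d) * volume S.carrier) ∧
      (∀ p, (c p).carrier ⊆ S.carrier) ∧ (∀ p, (interior (c p).carrier).Nonempty) ∧
      (∀ p q, p ≠ q → Disjoint (interior (c p).carrier) (interior (c q).carrier)) := by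
  obtain ⟨ϱ, hϱ, a, ha, φ, hS, hP⟩ := h
  refine ⟨_, hP, fun _ => rfl, fun p => ?_, fun p => ?_, fun p => ?_, fun p q hpq => ?_⟩
  · dsimp only
    rw [hS, volume_similar ha, volume_similar ha, MSScheme.volume_rule hd hϱ]
    ring
  · dsimp only
    rw [hS, ← σ.rules_cover ϱ hϱ S.type]
    exact Set.image_mono (Set.smul_set_mono
      (Set.subset_iUnion (fun p : (Σ j : Fin n, Fin (σ.numSub S.type j)) => ϱ S.type p.1 p.2) p))
  · dsimp only
    rw [interior_similar ha]
    exact ((MSScheme.interior_rule_nonempty hϱ _ _ _).smul_set).image _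
  · dsimp only
    rw [interior_similar ha, interior_similar ha]
    refine (Set.disjoint_image_iff φ.injective).2 ?_
    rw [← Set.image_smul, ← Set.image_smul]
    exact (Set.disjoint_image_iff (smul_right_injective _ ha.ne')).2
      (σ.rules_disjoint ϱ hϱ _ p q hpq)

lemma SubstitutesTo.sum_eq {σ : MSScheme d n} (hd : d ≠ 0) {S : LTile d n}
    {P : Finset (LTile d n)} (h : SubstitutesTo σ S P) (f : Fin n → ℝ → ℝ) :
    ∑ S' ∈ P, f S'.type S'.vol
      = ∑ p : (Σ j : Fin n, Fin (σ.numSub S.type j)),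
          f p.1 (σ.beta S.type p.1 p.2 ^ d * S.vol) := by
  obtain ⟨c, hP, ht, hv, -, hne, hdis⟩ := h.exists_param hd
  have hinj : Function.Injective c := by
    intro p q hpq
    by_contra hne'
    have h1 := hdis p q hne'
    rw [hpq, disjoint_self, Set.bot_eq_empty] at h1
    exact (hne q).ne_empty h1
  rw [hP, Finset.sum_image fun p _ q _ hpq => hinj hpq]
  refine Finset.sum_congr rfl fun p _ => ?_
  rw [ht, LTile.vol, LTile.vol, hv, ENNReal.toReal_mul,
    ENNReal.toReal_ofReal (σ.beta_pow_pos _ _ _).le]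

/-- The largest volume of a tile of `P`, with value `0` for empty `P`. -/
def maxVol (P : Finset (LTile d n)) : ℝ := ⨆ S : P, S.1.vol

lemma vol_le_maxVol {P : Finset (LTile d n)} {S : LTile d n} (hS : S ∈ P) : S.vol ≤ maxVol P :=
  le_ciSup (f := fun S : P => S.1.vol) (Set.finite_range _).bddAbove ⟨S, hS⟩

lemma maxTiles_subset (P : Finset (LTile d n)) : maxTiles P ⊆ P := Finset.filter_subset _ _

lemma IsPacking.exists_vol_eq {P : Finset (LTile d n)} (hP : IsPacking P) :
    ∃ S ∈ P, S.vol = maxVol P := by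
  have : Nonempty P := hP.nonempty.to_subtype
  obtain ⟨S, hS⟩ := exists_eq_ciSup_of_finite (f := fun S : P => S.1.vol)
  exact ⟨S.1, S.2, hS⟩

lemma IsPacking.maxVol_pos {P : Finset (LTile d n)} (hP : IsPacking P) : 0 < maxVol P := by
  obtain ⟨S, hS, h⟩ := hP.exists_vol_eq
  exact h ▸ hP.vol_pos hS

lemma IsPacking.mem_maxTiles {P : Finset (LTile d n)} (hP : IsPacking P) {S : LTile d n} :
    S ∈ maxTiles P ↔ S ∈ P ∧ S.vol = maxVol P := by
  rw [maxTiles, Finset.mem_filter]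
  refine and_congr_right fun hS => ⟨fun h => ?_, fun h S' hS' => ?_⟩
  · obtain ⟨S', hS', h'⟩ := hP.exists_vol_eq
    refine le_antisymm (vol_le_maxVol hS) (h' ▸ ?_)
    exact ENNReal.toReal_mono (hP.volume_ne_top S hS) (h S' hS')
  · refine (ENNReal.toReal_le_toReal (hP.volume_ne_top S' hS') (hP.volume_ne_top S hS)).1 ?_
    exact (vol_le_maxVol hS').trans_eq h.symm

lemma IsPacking.maxTiles_nonempty {P : Finset (LTile d n)} (hP : IsPacking P) :
    (maxTiles P).Nonempty := by
  obtain ⟨S, hS, h⟩ := hP.exists_vol_eq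
  exact ⟨S, hP.mem_maxTiles.2 ⟨hS, h⟩⟩

lemma SubstitutesTo.nonempty {σ : MSScheme d n} (hd : d ≠ 0) {S : LTile d n}
    {P : Finset (LTile d n)} (h : SubstitutesTo σ S P) : P.Nonempty := by
  obtain ⟨c, hP, -⟩ := h.exists_param hd
  have h1 := σ.sum_beta_pow hd S.type
  rcases isEmpty_or_nonempty (Σ j : Fin n, Fin (σ.numSub S.type j)) with h2 | h2
  · simp at h1
  · rw [hP]; exact Finset.univ_nonempty.image c

/-- Every piece of a substituted tile is a smaller tile inside it. -/
lemma SubstitutesTo.piece {σ : MSScheme d n} (hd : d ≠ 0) {S : LTile d n}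
    {P : Finset (LTile d n)} (h : SubstitutesTo σ S P) {X : LTile d n} (hX : X ∈ P)
    (hpos : 0 < volume S.carrier) (htop : volume S.carrier ≠ ⊤) :
    X.carrier ⊆ S.carrier ∧ (interior X.carrier).Nonempty ∧ 0 < volume X.carrier ∧
      volume X.carrier ≠ ⊤ ∧ X.vol < S.vol := by
  obtain ⟨c, hP, -, hv, hsub, hne, -⟩ := h.exists_param hd
  rw [hP, Finset.mem_image] at hX
  obtain ⟨p, -, rfl⟩ := hX
  refine ⟨hsub p, hne p, ?_, ?_, ?_⟩
  · rw [hv]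
    exact ENNReal.mul_pos (ENNReal.ofReal_pos.2 (σ.beta_pow_pos _ _ _)).ne' hpos.ne'
  · rw [hv]
    exact ENNReal.mul_ne_top ENNReal.ofReal_ne_top htop
  · rw [LTile.vol, LTile.vol, hv, ENNReal.toReal_mul,
      ENNReal.toReal_ofReal (σ.beta_pow_pos _ _ _).le]
    have h1 := ENNReal.toReal_pos hpos.ne' htop
    have h2 := σ.beta_pow_lt_one hd S.type p.1 p.2
    nlinarith

lemma SubstitutesTo.disjoint {σ : MSScheme d n} (hd : d ≠ 0) {S : LTile d n}
    {P : Finset (LTile d n)} (h : SubstitutesTo σ S P) {X Y : LTile d n} (hX : X ∈ P)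
    (hY : Y ∈ P) (hXY : X ≠ Y) : Disjoint (interior X.carrier) (interior Y.carrier) := by
  obtain ⟨c, hP, -, -, -, -, hdis⟩ := h.exists_param hd
  rw [hP, Finset.mem_image] at hX hY
  obtain ⟨p, -, rfl⟩ := hX
  obtain ⟨q, -, rfl⟩ := hY
  exact hdis p q fun h => hXY (h ▸ rfl)

section Step

variable {σ : MSScheme d n} {P P' : Finset (LTile d n)}
  {repl : LTile d n → Finset (LTile d n)}

lemma IsPacking.step (hd : d ≠ 0) (hP : IsPacking P)
    (hrepl : ∀ S ∈ maxTiles P, SubstitutesTo σ S (repl S))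
    (hP' : P' = (P \ maxTiles P) ∪ (maxTiles P).biUnion repl) :
    IsPacking P' ∧ maxVol P' < maxVol P ∧
      ∀ f : Fin n → ℝ → ℝ, ∑ S ∈ P', f S.type S.vol
        = ∑ S ∈ P \ maxTiles P, f S.type S.vol
          + ∑ S ∈ maxTiles P, ∑ p : (Σ j : Fin n, Fin (σ.numSub S.type j)),
              f p.1 (σ.beta S.type p.1 p.2 ^ d * S.vol) := by
  have hsub := maxTiles_subset P
  have hpiece : ∀ S ∈ maxTiles P, ∀ X ∈ repl S, X.carrier ⊆ S.carrier ∧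
      (interior X.carrier).Nonempty ∧ 0 < volume X.carrier ∧
      volume X.carrier ≠ ⊤ ∧ X.vol < S.vol := fun S hS X hX =>
    (hrepl S hS).piece hd hX (hP.volume_pos S (hsub hS)) (hP.volume_ne_top S (hsub hS))
  -- Every tile of `P'` lies inside a tile of `P` (its parent, or itself).
  have hmem : ∀ X ∈ P', (X ∈ P ∧ X ∉ maxTiles P) ∨ ∃ S ∈ maxTiles P, X ∈ repl S := by
    intro X hX
    rw [hP', Finset.mem_union, Finset.mem_sdiff, Finset.mem_biUnion] at hX
    exact hX
  have hcross : ∀ X ∈ P, ∀ S ∈ maxTiles P, X ≠ S → ∀ Y ∈ repl S,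
      Disjoint (interior X.carrier) (interior Y.carrier) := fun X hX S hS hXS Y hY =>
    (hP.disjoint X hX S (hsub hS) hXS).mono_right (interior_mono (hpiece S hS Y hY).1)
  have hrr : ∀ S ∈ maxTiles P, ∀ S' ∈ maxTiles P, S ≠ S' → ∀ X ∈ repl S, ∀ Y ∈ repl S',
      Disjoint (interior X.carrier) (interior Y.carrier) := fun S hS S' hS' hne X hX Y hY =>
    (hcross S (hsub hS) S' hS' hne Y hY).mono_left (interior_mono (hpiece S hS X hX).1)
  have hpack : IsPacking P' := by
    refine ⟨?_, ?_, ?_, ?_, ?_⟩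
    · obtain ⟨S, hS⟩ := hP.maxTiles_nonempty
      obtain ⟨X, hX⟩ := (hrepl S hS).nonempty hd
      exact ⟨X, hP' ▸ Finset.mem_union_right _ (Finset.mem_biUnion.2 ⟨S, hS, hX⟩)⟩
    · intro X hX
      rcases hmem X hX with ⟨h, -⟩ | ⟨S, hS, h⟩
      · exact hP.interior_nonempty X h
      · exact (hpiece S hS X h).2.1
    · intro X hX
      rcases hmem X hX with ⟨h, -⟩ | ⟨S, hS, h⟩
      · exact hP.volume_pos X h
      · exact (hpiece S hS X h).2.2.1
    · intro X hX
      rcases hmem X hX with ⟨h, -⟩ | ⟨S, hS, h⟩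
      · exact hP.volume_ne_top X h
      · exact (hpiece S hS X h).2.2.2.1
    · intro X hX Y hY hXY
      rcases hmem X hX with ⟨h, h'⟩ | ⟨S, hS, h⟩ <;> rcases hmem Y hY with ⟨k, k'⟩ | ⟨S', hS', k⟩
      · exact hP.disjoint X h Y k hXY
      · exact hcross X h S' hS' (fun h0 => h' (h0 ▸ hS')) Y k
      · exact (hcross Y k S hS (fun h0 => k' (h0 ▸ hS)) X h).symm
      · rcases eq_or_ne S S' with rfl | hne
        · exact (hrepl S hS).disjoint hd h k hXY
        · exact hrr S hS S' hS' hne X h Y k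
  refine ⟨hpack, ?_, fun f => ?_⟩
  · obtain ⟨X, hX, hX'⟩ := hpack.exists_vol_eq
    rw [← hX']
    rcases hmem X hX with ⟨h, h'⟩ | ⟨S, hS, h⟩
    · exact lt_of_le_of_ne (vol_le_maxVol h) fun h0 => h' (hP.mem_maxTiles.2 ⟨h, h0⟩)
    · exact ((hpiece S hS X h).2.2.2.2).trans_le (vol_le_maxVol (hsub hS))
  · have hself : ∀ X : LTile d n, (interior X.carrier).Nonempty →
        ¬ Disjoint (interior X.carrier) (interior X.carrier) := fun X hX h => by
      rw [disjoint_self, Set.bot_eq_empty] at h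
      exact hX.ne_empty h
    rw [hP', Finset.sum_union, Finset.sum_biUnion]
    · congr 1
      exact Finset.sum_congr rfl fun S hS => (hrepl S hS).sum_eq hd f
    · intro S hS S' hS' hne
      refine Finset.disjoint_left.2 fun X hX hX' => ?_
      exact hself X (hpiece S hS X hX).2.1 (hrr S hS S' hS' hne X hX X hX')
    · refine Finset.disjoint_left.2 fun X hX hX' => ?_
      rw [Finset.mem_sdiff] at hX
      obtain ⟨S, hS, h⟩ := Finset.mem_biUnion.1 hX'
      exact hself X (hP.interior_nonempty X hX.1)
        (hcross X hX.1 S hS (fun h0 => hX.2 (h0 ▸ hS)) X h)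

end Step

lemma IsKakutaniSeq.isPacking {σ : MSScheme d n} (hd : d ≠ 0) {i : Fin n}
    {π : ℕ → Finset (LTile d n)} (hπ : IsKakutaniSeq σ i π) (m : ℕ) : IsPacking (π m) := by
  induction m with
  | zero =>
    rw [hπ.1]
    refine ⟨⟨_, Finset.mem_singleton_self _⟩, ?_, ?_, ?_, ?_⟩ <;>
      intro S hS <;> rw [Finset.mem_singleton] at hS <;> subst hS
    · exact σ.interior_nonempty i
    · exact (σ.tile i).2.2.1
    · exact σ.volume_ne_top i
    · intro S' hS' hne
      exact absurd (Finset.mem_singleton.1 hS').symm hne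
  | succ m ih =>
    obtain ⟨repl, hrepl, h⟩ := hπ.2 m
    exact (ih.step hd hrepl h).1

end Geometry

/-! ### Counting the leaves of a truncated tree by type -/

namespace WGraph

variable {V : Type} [Fintype V] [DecidableEq V] (Γ : WGraph V)

/-- Explore paths from `v` and stop as soon as the remaining length `t` is nonpositive:
`Γ.leafCount U r v t` is the number of stopped paths that end at `r`, when `U h v t` counts the
paths from `v` to `h` of length less than `t`. A stopped path is either empty (if `t ≤ 0`), or a
path of length less than `t` to some `h` followed by an edge from `h` to `r` that brings the length
to at least `t`. -/
def leafCount (U : V → V → ℝ → ℝ) (r v : V) (t : ℝ) : ℝ :=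
  (if v = r ∧ t ≤ 0 then 1 else 0) +
    ∑ h, ∑ e : Γ.E h, if Γ.tgt e = r then U h v t - U h v (t - Γ.len e) else 0

variable {Γ} {U : V → V → ℝ → ℝ}

lemma leafCount_of_nonpos (hU : ∀ h, Γ.IsCount h (U h)) (r v : V) {t : ℝ} (ht : t ≤ 0) :
    Γ.leafCount U r v t = if v = r then 1 else 0 := by
  rw [leafCount, Finset.sum_eq_zero, add_zero]
  · simp [ht]
  · intro h _
    refine Finset.sum_eq_zero fun e _ => ?_
    have := Γ.len_pos e
    rw [(hU h).zero v t ht, (hU h).zero v _ (by linarith), sub_zero, ite_self]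

lemma leafCount_rec (hU : ∀ h, Γ.IsCount h (U h)) (r v : V) {t : ℝ} (ht : 0 < t) :
    Γ.leafCount U r v t = ∑ e : Γ.E v, Γ.leafCount U r (Γ.tgt e) (t - Γ.len e) := by
  -- The two renewal equations cancel, except for the edges leaving `v` of length at least `t`.
  have key : ∀ h (e : Γ.E h), U h v t - U h v (t - Γ.len e)
      = (if v = h ∧ t ≤ Γ.len e then 1 else 0) +
        ∑ e' : Γ.E v, (U h (Γ.tgt e') (t - Γ.len e')
          - U h (Γ.tgt e') (t - Γ.len e' - Γ.len e)) := by
    intro h e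
    rw [Finset.sum_sub_distrib, (hU h).rec_eq v t ht]
    rcases le_or_gt t (Γ.len e) with hte | hte
    · rw [(hU h).zero v _ (by linarith), Finset.sum_eq_zero (f := fun e' : Γ.E v =>
        U h (Γ.tgt e') (t - Γ.len e' - Γ.len e))]
      · simp [hte]
      · intro e' _
        have := Γ.len_pos e'
        exact (hU h).zero _ _ (by linarith)
    · rw [(hU h).rec_eq v (t - Γ.len e) (by linarith)]
      have : ∀ e' : Γ.E v, t - Γ.len e - Γ.len e' = t - Γ.len e' - Γ.len e := fun e' => by ring
      simp only [this, not_le.2 hte, and_false, if_false]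
      ring
  have h1 : ∀ h, (∑ e : Γ.E h, if Γ.tgt e = r then U h v t - U h v (t - Γ.len e) else 0)
      = (∑ e : Γ.E h, if Γ.tgt e = r ∧ v = h ∧ t ≤ Γ.len e then 1 else 0)
        + ∑ e' : Γ.E v, ∑ e : Γ.E h, if Γ.tgt e = r then U h (Γ.tgt e') (t - Γ.len e')
          - U h (Γ.tgt e') (t - Γ.len e' - Γ.len e) else 0 := by
    intro h
    rw [Finset.sum_comm, ← Finset.sum_add_distrib]
    refine Finset.sum_congr rfl fun e _ => ?_
    by_cases hr : Γ.tgt e = r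
    · simp only [hr, if_true, true_and]
      exact key h e
    · simp [hr]
  simp only [leafCount, Finset.sum_add_distrib, h1]
  rw [Finset.sum_comm (s := (Finset.univ : Finset (Γ.E v))), ← add_assoc]
  congr 1
  rw [if_neg (fun h => absurd h.2 (not_le.2 ht)), zero_add,
    Finset.sum_eq_single v (fun h _ hne => ?_) (fun h => absurd (Finset.mem_univ v) h)]
  · refine Finset.sum_congr rfl fun e _ => ?_
    simp
  · exact Finset.sum_eq_zero fun e _ => if_neg fun h' => hne h'.2.1.symm

lemma tendsto_leafCount {c : V → ℝ} (v : V)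
    (hU : ∀ h, Tendsto (fun t => Real.exp (-t) * U h v t) atTop (𝓝 (c h))) (r : V) :
    Tendsto (fun t => Real.exp (-t) * Γ.leafCount U r v t) atTop
      (𝓝 (∑ h, ∑ e : Γ.E h, if Γ.tgt e = r then c h * (1 - Real.exp (-Γ.len e)) else 0)) := by
  have h1 : Tendsto (fun t => ∑ h, ∑ e : Γ.E h, if Γ.tgt e = r then
      Real.exp (-t) * U h v t
        - Real.exp (-Γ.len e) * (Real.exp (-(t - Γ.len e)) * U h v (t - Γ.len e)) else 0) atTop
      (𝓝 (∑ h, ∑ e : Γ.E h, if Γ.tgt e = r then c h * (1 - Real.exp (-Γ.len e)) else 0)) := by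
    refine tendsto_finsetSum _ fun h _ => tendsto_finsetSum _ fun e _ => ?_
    split_ifs
    · have h2 := (hU h).comp (tendsto_atTop_add_const_right atTop (-Γ.len e) tendsto_id)
      have h3 := (hU h).sub (h2.const_mul (Real.exp (-Γ.len e)))
      rw [mul_one_sub, mul_comm (c h) (Real.exp _)]
      exact h3
    · exact tendsto_const_nhds
  refine h1.congr' ?_
  filter_upwards [eventually_gt_atTop 0] with t ht
  rw [leafCount, if_neg (fun h => absurd h.2 (not_le.2 ht)), zero_add, Finset.mul_sum]
  refine Finset.sum_congr rfl fun h _ => ?_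
  rw [Finset.mul_sum]
  refine Finset.sum_congr rfl fun e _ => ?_
  split_ifs
  · rw [← mul_assoc, ← Real.exp_add, mul_sub]
    congr 3
    ring_nf
  · rw [mul_zero]

end WGraph

/-! ### The graph of a substitution scheme -/

namespace MSScheme

variable {d n : ℕ} (σ : MSScheme d n)

lemma neg_log_pos (hd : d ≠ 0) (i j : Fin n) (k : Fin (σ.numSub i j)) :
    0 < -Real.log (σ.beta i j k ^ d) :=
  neg_pos.2 (Real.log_neg (σ.beta_pow_pos i j k) (σ.beta_pow_lt_one hd i j k))

lemma exists_delta (hd : d ≠ 0) : ∃ δ : ℝ, 0 < δ ∧ ∀ i j k, δ ≤ -Real.log (σ.beta i j k ^ d) := by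
  rcases isEmpty_or_nonempty (Σ i : Fin n, Σ j : Fin n, Fin (σ.numSub i j)) with h | h
  · exact ⟨1, one_pos, fun i j k => (h.false ⟨i, j, k⟩).elim⟩
  · obtain ⟨p, hp⟩ := Finite.exists_min
      fun p : (Σ i : Fin n, Σ j : Fin n, Fin (σ.numSub i j)) =>
        -Real.log (σ.beta p.1 p.2.1 p.2.2 ^ d)
    exact ⟨_, σ.neg_log_pos hd p.1 p.2.1 p.2.2, fun i j k => hp ⟨i, j, k⟩⟩

lemma exists_len_le : ∃ L : ℝ, ∀ i j k, -Real.log (σ.beta i j k ^ d) ≤ L := by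
  obtain ⟨L, hL⟩ := (Set.finite_range fun p : (Σ i : Fin n, Σ j : Fin n, Fin (σ.numSub i j)) =>
    -Real.log (σ.beta p.1 p.2.1 p.2.2 ^ d)).bddAbove
  exact ⟨L, fun i j k => hL ⟨⟨i, j, k⟩, rfl⟩⟩

/-- The graph of the scheme: vertices are types, and each substitution tile of type `j` in `T i`
is an edge from `i` to `j`, whose length is minus the logarithm of its relative volume. -/
def graph (hd : d ≠ 0) : WGraph (Fin n) where
  E i := Σ j : Fin n, Fin (σ.numSub i j)
  fin _ := inferInstance
  tgt e := e.1
  len {i} e := -Real.log (σ.beta i e.1 e.2 ^ d)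
  δ := (σ.exists_delta hd).choose
  δ_pos := (σ.exists_delta hd).choose_spec.1
  δ_le e := (σ.exists_delta hd).choose_spec.2 _ _ _
  sum_exp i := by
    simp only [neg_neg, Real.exp_log (σ.beta_pow_pos i _ _)]
    exact σ.sum_beta_pow hd i

variable (hd : d ≠ 0)

lemma exp_neg_len {i : Fin n} (e : (σ.graph hd).E i) :
    Real.exp (-(σ.graph hd).len e) = σ.beta i e.1 e.2 ^ d := by
  change Real.exp (- -Real.log (σ.beta i e.1 e.2 ^ d)) = _
  rw [neg_neg, Real.exp_log (σ.beta_pow_pos i _ _)]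

lemma two_le_card (i : Fin n) : 2 ≤ Fintype.card ((σ.graph hd).E i) := by
  by_contra h
  have h1 : Fintype.card ((σ.graph hd).E i) ≤ 1 := by omega
  have h2 := (σ.graph hd).sum_exp i
  have : Subsingleton ((σ.graph hd).E i) := Fintype.card_le_one_iff_subsingleton.1 h1
  rcases isEmpty_or_nonempty ((σ.graph hd).E i) with h3 | ⟨⟨e⟩⟩
  · simp at h2
  · rw [Fintype.sum_subsingleton _ e] at h2
    have := (σ.graph hd).len_pos e
    have h4 : Real.exp (-(σ.graph hd).len e) < 1 := Real.exp_lt_one_iff.2 (by linarith)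
    exact h4.ne h2

lemma exists_hasPath (hirr : σ.Irreducible) (v w : Fin n) : ∃ s, (σ.graph hd).HasPath v w s := by
  have hstep : ∀ a b, 0 < σ.numSub a b → ∃ s, (σ.graph hd).HasPath a b s := fun a b hab =>
    ⟨_, .cons (Γ := σ.graph hd) (v := a) (w := b) (⟨b, ⟨0, hab⟩⟩ : Σ j, Fin (σ.numSub a j))
      (.nil b)⟩
  induction hirr v w with
  | single h => exact hstep _ _ h
  | tail _ h ih =>
    obtain ⟨s, hs⟩ := ih
    obtain ⟨t, ht⟩ := hstep _ _ h
    exact ⟨_, hs.trans ht⟩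

lemma hasPath_sum (m : ℕ) (p : Fin (m + 1) → Fin n)
    (e : (t : Fin m) → Fin (σ.numSub (p t.castSucc) (p t.succ))) :
    (σ.graph hd).HasPath (p 0) (p (Fin.last m))
      (∑ t : Fin m, -Real.log (σ.beta (p t.castSucc) (p t.succ) (e t) ^ d)) := by
  induction m with
  | zero => simpa using WGraph.HasPath.nil (Γ := σ.graph hd) (p 0)
  | succ m ih =>
    rw [Fin.sum_univ_succ]
    exact .cons (Γ := σ.graph hd) (v := p 0) (⟨p 1, e 0⟩ : Σ j, Fin (σ.numSub (p 0) j))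
      (ih (fun t => p t.succ) (fun t => e t.succ))

variable {σ} in
lemma IsClosedPathLogVol.hasPath {i : Fin n} {a : ℝ} (h : σ.IsClosedPathLogVol i a) :
    (σ.graph hd).HasPath i i (-a) ∧ a < 0 := by
  obtain ⟨m, hm, p, h0, h1, e, rfl⟩ := h
  refine ⟨?_, ?_⟩
  · have := σ.hasPath_sum hd m p e
    rw [h0, h1, Finset.sum_neg_distrib] at this
    exact this
  · have : Nonempty (Fin m) := ⟨⟨0, hm⟩⟩
    exact Finset.sum_neg (fun t _ => neg_pos.1 (σ.neg_log_pos hd _ _ _)) Finset.univ_nonempty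

lemma path_dense (hirr : σ.Irreducible) (hinc : σ.Incommensurable) (v w : Fin n) (ε : ℝ)
    (hε : ε > 0) : ∃ A : ℝ, ∀ s, A ≤ s → ∃ p, (σ.graph hd).HasPath v w p ∧ s ≤ p ∧ p ≤ s + ε := by
  obtain ⟨i, j, a, b, ha, hb, hab⟩ := hinc
  obtain ⟨ha1, ha2⟩ := ha.hasPath hd
  obtain ⟨hb1, hb2⟩ := hb.hasPath hd
  refine (σ.graph hd).exists_path_mem_Icc (σ.exists_hasPath hd hirr) (neg_pos.2 ha2) ?_ ha1 hb1
    v w hε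
  rintro ⟨q, hq⟩
  rw [neg_div_neg_eq] at hq
  exact hab q (by rw [hq, div_mul_cancel₀ _ hb2.ne])

/-- In dimension zero all closed paths have logarithmic volume `0`, which is commensurable. -/
lemma Incommensurable.dim_ne_zero {σ : MSScheme d n} (hinc : σ.Incommensurable) : d ≠ 0 := by
  rintro rfl
  obtain ⟨i, j, a, b, ⟨m, -, p, -, -, e, rfl⟩, -, hab⟩ := hinc
  exact hab 0 (by simp)

/-! ### The matrix `Q` -/

lemma Mmat_nonneg (i j : Fin n) : 0 ≤ Mmat σ i j :=
  Finset.sum_nonneg (s := Finset.univ) fun k _ => (σ.beta_pow_pos i j k).le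

lemma Mmat_pos {i j : Fin n} (h : 0 < σ.numSub i j) : 0 < Mmat σ i j :=
  Finset.sum_pos (s := Finset.univ) (fun k _ => σ.beta_pow_pos i j k) ⟨⟨0, h⟩, Finset.mem_univ _⟩

lemma Mmat_row (hd : d ≠ 0) (i : Fin n) : ∑ j, Mmat σ i j = 1 := by
  rw [← σ.sum_beta_pow hd i, Fintype.sum_sigma]
  rfl

variable {σ} in
lemma Irreducible.transGen_Mmat (hirr : σ.Irreducible) (i j : Fin n) :
    Relation.TransGen (fun a b => 0 < Mmat σ a b) i j :=
  Relation.TransGen.mono (fun _ _ h => σ.Mmat_pos h) i j (hirr i j)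

lemma adjugate_pos (hd : d ≠ 0) (hirr : σ.Irreducible) (a b : Fin n) :
    0 < (1 - Mmat σ).adjugate a b := by
  rw [adjugate_rows_eq σ.Mmat_nonneg (σ.Mmat_row hd) hirr.transGen_Mmat a b b]
  exact adjugate_diag_pos σ.Mmat_nonneg (σ.Mmat_row hd) hirr.transGen_Mmat b

lemma log_beta_neg (i j : Fin n) (k : Fin (σ.numSub i j)) : Real.log (σ.beta i j k) < 0 :=
  Real.log_neg (σ.beta_pos i j k) (σ.beta_lt_one i j k)

lemma normalizer_pos (hd : d ≠ 0) (hirr : σ.Irreducible) (i : Fin n) :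
    0 < -(Matrix.trace ((1 - Mmat σ).adjugate * M'mat σ)) := by
  have hle : ∀ a b, M'mat σ a b ≤ 0 := fun a b =>
    Finset.sum_nonpos (s := Finset.univ) fun k _ =>
      mul_nonpos_of_nonneg_of_nonpos (σ.beta_pow_pos a b k).le (σ.log_beta_neg a b k).le
  obtain ⟨j, hj⟩ : ∃ j, 0 < σ.numSub i j := by
    obtain ⟨⟨j, k⟩⟩ : Nonempty ((σ.graph hd).E i) :=
      Fintype.card_pos_iff.1 (by have := σ.two_le_card hd i; omega)
    exact ⟨j, k.pos⟩
  have hlt : M'mat σ i j < 0 :=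
    Finset.sum_neg (s := Finset.univ) (fun k _ =>
      mul_neg_of_pos_of_neg (σ.beta_pow_pos i j k) (σ.log_beta_neg i j k))
      ⟨⟨0, hj⟩, Finset.mem_univ _⟩
  have hadj := σ.adjugate_pos hd hirr
  rw [neg_pos, Matrix.trace]
  simp only [Matrix.diag_apply, Matrix.mul_apply]
  refine Finset.sum_neg' (fun a _ => Finset.sum_nonpos fun b _ =>
    mul_nonpos_of_nonneg_of_nonpos (hadj a b).le (hle b a)) ⟨j, Finset.mem_univ j, ?_⟩
  exact Finset.sum_neg' (fun b _ => mul_nonpos_of_nonneg_of_nonpos (hadj j b).le (hle b j))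
    ⟨i, Finset.mem_univ i, mul_neg_of_pos_of_neg (hadj j i) hlt⟩

lemma Qmat_pos (hd : d ≠ 0) (hirr : σ.Irreducible) (a b : Fin n) : 0 < Qmat σ a b :=
  mul_pos (inv_pos.2 (σ.normalizer_pos hd hirr a)) (σ.adjugate_pos hd hirr a b)

lemma Qmat_rows_eq (hd : d ≠ 0) (hirr : σ.Irreducible) (a b c : Fin n) :
    Qmat σ a c = Qmat σ b c := by
  simp only [Qmat, Matrix.smul_apply]
  rw [adjugate_rows_eq σ.Mmat_nonneg (σ.Mmat_row hd) hirr.transGen_Mmat a b c]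

/-- Each row of `Q` is a stationary measure for the walk on the graph of the scheme. -/
lemma Qmat_stationary (i : Fin n) (f : Fin n → ℝ) :
    ∑ v, ∑ e : (σ.graph hd).E v, Qmat σ i v * Real.exp (-(σ.graph hd).len e)
      * f ((σ.graph hd).tgt e) = ∑ v, Qmat σ i v * f v := by
  have h1 : ∀ v, ∑ e : (σ.graph hd).E v, Qmat σ i v * Real.exp (-(σ.graph hd).len e)
      * f ((σ.graph hd).tgt e) = ∑ c, Qmat σ i v * Mmat σ v c * f c := by
    intro v
    simp only [σ.exp_neg_len hd]
    refine (Fintype.sum_sigma (α := fun j => Fin (σ.numSub v j)) _).trans ?_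
    refine Finset.sum_congr rfl fun c _ => ?_
    rw [Mmat, Matrix.of_apply, Finset.mul_sum, Finset.sum_mul]
    rfl
  simp only [h1]
  rw [Finset.sum_comm]
  refine Finset.sum_congr rfl fun c _ => ?_
  rw [← Finset.sum_mul]
  congr 1
  simp only [Qmat, Matrix.smul_apply, smul_eq_mul, mul_assoc]
  rw [← Finset.mul_sum, adjugate_stationary (σ.Mmat_row hd)]

end MSScheme

/-! ### Potentials along a Kakutani sequence -/

section Kakutani

variable {d n : ℕ} {σ : MSScheme d n} {i : Fin n} {π : ℕ → Finset (LTile d n)}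

lemma IsKakutaniSeq.maxVol_succ_lt (hd : d ≠ 0) (hπ : IsKakutaniSeq σ i π) (m : ℕ) :
    maxVol (π (m + 1)) < maxVol (π m) := by
  obtain ⟨repl, hrepl, h⟩ := hπ.2 m
  exact ((hπ.isPacking hd m).step hd hrepl h).2.1

/-- If `F` satisfies the renewal equation with constant source `c`, then as long as the largest
tile is larger than `θ`, one step of a Kakutani sequence lowers the sum of `F` over the tiles
(evaluated at the logarithm of the volume relative to `θ`) by `c` for each substituted tile. -/
lemma IsKakutaniSeq.potential_step (hd : d ≠ 0) (hπ : IsKakutaniSeq σ i π)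
    {F : Fin n → ℝ → ℝ} {c : ℝ}
    (hF : ∀ v t, 0 < t → F v t
      = c + ∑ e : (σ.graph hd).E v, F ((σ.graph hd).tgt e) (t - (σ.graph hd).len e))
    {θ : ℝ} (hθ : 0 < θ) {m : ℕ} (hm : θ < maxVol (π m)) :
    ∑ S ∈ π m, F S.type (Real.log S.vol - Real.log θ)
      = c * (maxTiles (π m)).card
        + ∑ S ∈ π (m + 1), F S.type (Real.log S.vol - Real.log θ) := by
  have hP := hπ.isPacking hd m
  obtain ⟨repl, hrepl, h⟩ := hπ.2 m
  rw [(hP.step hd hrepl h).2.2 fun v x => F v (Real.log x - Real.log θ),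
    ← Finset.sum_sdiff (maxTiles_subset (π m))]
  have h1 : ∑ S ∈ maxTiles (π m), F S.type (Real.log S.vol - Real.log θ)
      = ∑ S ∈ maxTiles (π m), (c + ∑ p : (Σ j : Fin n, Fin (σ.numSub S.type j)),
          F p.1 (Real.log (σ.beta S.type p.1 p.2 ^ d * S.vol) - Real.log θ)) := by
    refine Finset.sum_congr rfl fun S hS => ?_
    have hS' := hP.mem_maxTiles.1 hS
    have hpos := hP.vol_pos hS'.1
    rw [hF S.type _ (sub_pos.2 (Real.log_lt_log hθ (hS'.2 ▸ hm)))]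
    congr 1
    refine Finset.sum_congr rfl fun p _ => ?_
    rw [Real.log_mul (σ.beta_pow_pos _ _ _).ne' hpos.ne']
    change F p.1 (_ - -Real.log (σ.beta S.type p.1 p.2 ^ d)) = _
    congr 1
    ring
  rw [h1, Finset.sum_add_distrib, Finset.sum_const, nsmul_eq_mul]
  ring

/-- The largest volume tends to zero: otherwise the total number of paths counted from the tiles of
`π m` would decrease by at least one at every step. -/
lemma IsKakutaniSeq.exists_maxVol_le (hd : d ≠ 0) (hπ : IsKakutaniSeq σ i π)
    {U : Fin n → Fin n → ℝ → ℝ} (hU : ∀ h, (σ.graph hd).IsCount h (U h)) {θ : ℝ} (hθ : 0 < θ) :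
    ∃ m, maxVol (π m) ≤ θ := by
  by_contra! hlt
  set F : Fin n → ℝ → ℝ := fun v t => ∑ h, U h v t with hFdef
  have hF : ∀ v t, 0 < t → F v t
      = 1 + ∑ e : (σ.graph hd).E v, F ((σ.graph hd).tgt e) (t - (σ.graph hd).len e) := by
    intro v t ht
    simp only [hFdef]
    rw [Finset.sum_comm, Finset.sum_congr rfl fun h _ => (hU h).rec_eq v t ht,
      Finset.sum_add_distrib]
    simp
  set Φ : ℕ → ℝ := fun m => ∑ S ∈ π m, F S.type (Real.log S.vol - Real.log θ) with hΦ
  have hstep : ∀ m, Φ (m + 1) ≤ Φ m - 1 := by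
    intro m
    have h1 : Φ m = _ := hπ.potential_step hd hF hθ (hlt m)
    have h2 : (1 : ℝ) ≤ (maxTiles (π m)).card := by
      exact_mod_cast (hπ.isPacking hd m).maxTiles_nonempty.card_pos
    have h3 : ∑ S ∈ π (m + 1), F S.type (Real.log S.vol - Real.log θ) = Φ (m + 1) := rfl
    rw [h3] at h1
    linarith
  have hle : ∀ m : ℕ, Φ m ≤ Φ 0 - m := by
    intro m
    induction m with
    | zero => simp
    | succ m ih => push_cast; linarith [hstep m]
  have hnn : ∀ m, 0 ≤ Φ m := fun m =>
    Finset.sum_nonneg fun S _ => Finset.sum_nonneg fun h _ => (hU h).nonneg _ _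
  obtain ⟨m, hm⟩ := exists_nat_gt (Φ 0)
  linarith [hle m, hnn m]

lemma IsKakutaniSeq.tendsto_log (hd : d ≠ 0) (hπ : IsKakutaniSeq σ i π) :
    Tendsto (fun m => Real.log (volume (σ.T i)).toReal - Real.log (maxVol (π m))) atTop atTop := by
  choose U hU using (σ.graph hd).exists_isCount
  refine tendsto_atTop_atTop_of_monotone (monotone_nat_of_le_succ fun m => ?_) fun b => ?_
  · exact sub_le_sub_left (Real.log_le_log (hπ.isPacking hd (m + 1)).maxVol_pos
      (hπ.maxVol_succ_lt hd m).le) _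
  · obtain ⟨m, hm⟩ := hπ.exists_maxVol_le hd hU
      (Real.exp_pos (Real.log (volume (σ.T i)).toReal - b))
    have := Real.log_le_log (hπ.isPacking hd m).maxVol_pos hm
    rw [Real.log_exp] at this
    exact ⟨m, by linarith⟩

/-- The number of tiles of type `r` in `π m` depends only on the largest volume in `π m`. -/
lemma IsKakutaniSeq.countType_eq (hd : d ≠ 0) (hπ : IsKakutaniSeq σ i π)
    {U : Fin n → Fin n → ℝ → ℝ} (hU : ∀ h, (σ.graph hd).IsCount h (U h)) (r : Fin n) (m : ℕ) :
    (countType (π m) r : ℝ) = (σ.graph hd).leafCount U r i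
      (Real.log (volume (σ.T i)).toReal - Real.log (maxVol (π m))) := by
  set θ := maxVol (π m) with hθ
  have hθpos : 0 < θ := (hπ.isPacking hd m).maxVol_pos
  have hanti : StrictAnti fun m => maxVol (π m) := strictAnti_nat_of_succ_lt (hπ.maxVol_succ_lt hd)
  have hcons : ∀ k ≤ m, ∑ S ∈ π k, (σ.graph hd).leafCount U r S.type (Real.log S.vol - Real.log θ)
      = (σ.graph hd).leafCount U r i (Real.log (volume (σ.T i)).toReal - Real.log θ) := by
    intro k
    induction k with
    | zero => intro _; rw [hπ.1, Finset.sum_singleton]; rfl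
    | succ k ih =>
      intro hk
      rw [← ih (by omega), hπ.potential_step hd (c := 0) (fun v t ht => by
        rw [zero_add, WGraph.leafCount_rec hU r v ht]) hθpos (hanti (by omega : k < m))]
      rw [zero_mul, zero_add]
  rw [← hcons m le_rfl, countType, Finset.card_filter, Nat.cast_sum]
  refine Finset.sum_congr rfl fun S hS => ?_
  rw [WGraph.leafCount_of_nonpos hU]
  · push_cast; rfl
  · exact sub_nonpos.2 (Real.log_le_log ((hπ.isPacking hd m).vol_pos hS) (vol_le_maxVol hS))

lemma card_eq_sum_countType (P : Finset (LTile d n)) : (P.card : ℝ) = ∑ r, (countType P r : ℝ) := by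
  rw [Finset.card_eq_sum_card_fiberwise (f := LTile.type) (t := Finset.univ)
    (fun _ _ => Finset.mem_coe.2 (Finset.mem_univ _)), Nat.cast_sum]
  rfl

end Kakutani

end

/-- **Theorem 1.11 (2).** For an irreducible incommensurable multiscale substitution
scheme, the matrix `Q_σ` has positive entries and equal rows, and in any Kakutani
sequence of partitions of `T i`, the frequency of tiles of type `r` converges to
`(Σ_h q_h Σ_k (1 − (β_hr^(k))^d)) / (Σ_{h,j} q_h Σ_k (1 − (β_hj^(k))^d))`. -/
theorem type_frequency_kakutani {d n : ℕ} (σ : MSScheme d n)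
    (hirr : σ.Irreducible) (hinc : σ.Incommensurable) (i : Fin n)
    (π : ℕ → Finset (LTile d n)) (hπ : IsKakutaniSeq σ i π) (r : Fin n) :
    (∀ a b : Fin n, 0 < Qmat σ a b) ∧
    (∀ a b c : Fin n, Qmat σ a c = Qmat σ b c) ∧
    Tendsto (fun m => (countType (π m) r : ℝ) / ((π m).card : ℝ)) atTop
      (𝓝 ((∑ h : Fin n, Qmat σ i h * ∑ k : Fin (σ.numSub h r), (1 - σ.beta h r k ^ d)) /
          (∑ h : Fin n, ∑ j : Fin n,
            Qmat σ i h * ∑ k : Fin (σ.numSub h j), (1 - σ.beta h j k ^ d)))) := by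
  have hd := hinc.dim_ne_zero
  refine ⟨σ.Qmat_pos hd hirr, σ.Qmat_rows_eq hd hirr, ?_⟩
  choose U hU using (σ.graph hd).exists_isCount
  obtain ⟨L, hL⟩ := σ.exists_len_le
  set C := ∑ v, ∑ e : (σ.graph hd).E v,
    Qmat σ i v * Real.exp (-(σ.graph hd).len e) * (σ.graph hd).len e with hC
  have hne : ∀ v, Nonempty ((σ.graph hd).E v) := fun v =>
    Fintype.card_pos_iff.1 (by have := σ.two_le_card hd v; omega)
  have hCpos : 0 < C :=
    Finset.sum_pos (fun v _ => Finset.sum_pos (fun e _ =>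
      mul_pos (mul_pos (σ.Qmat_pos hd hirr i v) (Real.exp_pos _)) ((σ.graph hd).len_pos e))
      (Finset.univ_nonempty_iff.2 (hne v))) ⟨i, Finset.mem_univ i⟩
  set N : Fin n → ℝ := fun r =>
    ∑ h : Fin n, Qmat σ i h * ∑ k : Fin (σ.numSub h r), (1 - σ.beta h r k ^ d) with hN
  have hlim : ∀ r, Tendsto (fun t => Real.exp (-t) * (σ.graph hd).leafCount U r i t) atTop
      (𝓝 (N r / C)) := by
    intro r
    have h1 := WGraph.tendsto_leafCount (Γ := σ.graph hd) i (fun h =>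
      (hU h).tendsto_exp_mul (σ.Qmat_pos hd hirr i) (σ.Qmat_stationary hd i)
        (σ.path_dense hd hirr hinc) (σ.two_le_card hd) (fun v e => hL v e.1 e.2) i) r
    rw [← hC] at h1
    convert h1 using 2
    rw [hN, Finset.sum_div]
    refine Finset.sum_congr rfl fun h _ => ?_
    simp only [σ.exp_neg_len hd]
    refine Eq.trans ?_ (Fintype.sum_sigma (α := fun j => Fin (σ.numSub h j)) _).symm
    rw [Finset.sum_eq_single r]
    · simp only [MSScheme.graph, if_true]
      rw [← Finset.mul_sum]
      ring
    · intro b _ hb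
      exact Finset.sum_eq_zero fun k _ => if_neg hb
    · exact fun h => absurd (Finset.mem_univ r) h
  have hnn : ∀ r, 0 ≤ N r := fun r => Finset.sum_nonneg fun h _ =>
    mul_nonneg (σ.Qmat_pos hd hirr i h).le (Finset.sum_nonneg fun k _ =>
      sub_nonneg.2 (σ.beta_pow_lt_one hd h r k).le)
  have hNpos : 0 < ∑ r, N r := by
    obtain ⟨⟨j, k⟩⟩ := hne i
    refine Finset.sum_pos' (fun r _ => hnn r) ⟨j, Finset.mem_univ j, ?_⟩
    refine Finset.sum_pos' (fun h _ => mul_nonneg (σ.Qmat_pos hd hirr i h).le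
      (Finset.sum_nonneg fun k _ => sub_nonneg.2 (σ.beta_pow_lt_one hd h j k).le))
      ⟨i, Finset.mem_univ i, mul_pos (σ.Qmat_pos hd hirr i i) ?_⟩
    exact Finset.sum_pos (fun k _ => sub_pos.2 (σ.beta_pow_lt_one hd i j k))
      ⟨k, Finset.mem_univ k⟩
  have hden : ∑ h : Fin n, ∑ j : Fin n,
      Qmat σ i h * ∑ k : Fin (σ.numSub h j), (1 - σ.beta h j k ^ d) = ∑ r, N r :=
    Finset.sum_comm
  have ht := hπ.tendsto_log hd
  have hcount := fun r => (hlim r).comp ht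
  have htot := tendsto_finsetSum Finset.univ fun r _ => hcount r
  rw [← Finset.sum_div] at htot
  have hratio := (hcount r).div htot (div_pos hNpos hCpos).ne'
  rw [div_div_div_cancel_right₀ hCpos.ne'] at hratio
  rw [hden]
  refine hratio.congr fun m => ?_
  simp only [Pi.div_apply, Function.comp_apply]
  rw [← Finset.mul_sum, mul_div_mul_left _ _ (Real.exp_pos _).ne', card_eq_sum_countType,
    hπ.countType_eq hd hU, Finset.sum_congr rfl fun r _ => hπ.countType_eq hd hU r m]
end
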